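/- arXiv:1910.08255 — 11 statements merged into one kernel-verified Lean document; each statement's English description precedes it below -/
import Mathlib

section
/- Let f : 𝒜 → 𝒜 satisfy f(A + B·P) ≡ f(A) (mod P) for every A, B ∈ 𝒜 and every irreducible P ∈ 𝒫, and suppose that deg(f(A)) < q^{deg(A)} / (27·q·deg(A)) whenever deg(A) is sufficiently large. Then f is a polynomial map. -/
open Polynomial

theorem rz_rad {F : Type*} [Field F] (R h : F[X])
    (H : ∀ P : F[X], Irreducible P → P ∣ R → P ∣ h) : R ∣ h * derivative R := by
  classical
  by_cases hh : h = 0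
  · simp [hh]
  have h1 : UniqueFactorizationMonoid.radical R ∣ h := by
    rw [UniqueFactorizationMonoid.radical_dvd_iff_primeFactors_subset hh]
    intro P hP
    rw [UniqueFactorizationMonoid.mem_primeFactors] at hP ⊢
    have h2 := UniqueFactorizationMonoid.irreducible_of_normalized_factor P hP
    have h3 := UniqueFactorizationMonoid.dvd_of_mem_normalizedFactors hP
    have h4 := UniqueFactorizationMonoid.normalize_normalized_factor P hP
    rw [UniqueFactorizationMonoid.mem_normalizedFactors_iff' hh]
    exact ⟨h2, h4, H P h2 h3⟩
  have h5 := mul_dvd_mul h1 (divRadical_dvd_derivative R)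
  rwa [EuclideanDomain.radical_mul_divRadical] at h5

theorem rz_small {F : Type*} [Field F] [Fintype F] (n : ℕ) (hn : n ≠ 0) (h : F[X])
    (H : ∀ P : F[X], Irreducible P → P.natDegree ≤ n → P ∣ h)
    (hd : h.natDegree < Fintype.card F ^ n) : h = 0 := by
  have hq : 1 < Fintype.card F := Fintype.one_lt_card
  have hne : (X ^ Fintype.card F ^ n - X : F[X]) ≠ 0 :=
    FiniteField.X_pow_card_pow_sub_X_ne_zero F hn hq
  have h1 := rz_rad (X ^ Fintype.card F ^ n - X : F[X]) h (by
    intro P hP hdv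
    apply H P hP
    rw [← Nat.card_eq_fintype_card] at hdv
    exact Nat.le_of_dvd (Nat.pos_of_ne_zero hn) (hP.natDegree_dvd_of_dvd_X_pow_card_pow_sub_X hdv))
  have h2 : derivative (X ^ Fintype.card F ^ n - X : F[X]) = -1 := by
    simp [derivative_X_pow, hn]
  rw [h2, mul_neg, mul_one, dvd_neg] at h1
  by_contra h0
  have := Polynomial.natDegree_le_of_dvd h1 h0
  rw [FiniteField.X_pow_card_pow_sub_X_natDegree_eq F hn hq] at this
  omega

theorem rz_prod {F : Type*} [Field F] (s : Finset F[X]) (W : F[X] → F[X])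
    (hW : ∀ a ∈ s, W a ≠ 0) :
    ∃ E : F[X], E ≠ 0 ∧ ∀ A h : F[X], (∀ a ∈ s, A - a ∣ h * W a) →
      (∏ a ∈ s, (A - a)) ∣ h * E := by
  classical
  induction s using Finset.induction_on with
  | empty => exact ⟨1, one_ne_zero, by simp⟩
  | insert b s hb ih =>
    obtain ⟨E, hE, H⟩ := ih (fun a ha => hW a (Finset.mem_insert_of_mem ha))
    refine ⟨E * W b * ∏ a ∈ s, (b - a), ?_, ?_⟩
    · refine mul_ne_zero (mul_ne_zero hE (hW b (Finset.mem_insert_self _ _))) ?_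
      rw [Finset.prod_ne_zero_iff]
      intro a ha h0
      rw [sub_eq_zero] at h0
      exact hb (h0 ▸ ha)
    · intro A h hA
      rw [Finset.prod_insert hb]
      have h1 : (∏ a ∈ s, (A - a)) ∣ h * E * W b :=
        (H A h (fun a ha => hA a (Finset.mem_insert_of_mem ha))).mul_right _
      have h2 : A - b ∣ h * E * W b := by
        have := (hA b (Finset.mem_insert_self _ _)).mul_right E
        convert this using 1; ring
      obtain ⟨v, hv⟩ : A - b ∣ (∏ a ∈ s, (A - a)) - ∏ a ∈ s, (b - a) := by
        have := sub_dvd_eval_sub A b (∏ a ∈ s, (X - C a))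
        simpa [eval_prod] using this
      have h3 : h * (E * W b * ∏ a ∈ s, (b - a)) =
          (h * E * W b) * (∏ a ∈ s, (A - a)) - (A - b) * (h * E * W b) * v := by
        linear_combination (- h * E * W b) * hv
      rw [h3]
      exact dvd_sub (mul_dvd_mul h2 dvd_rfl) ((mul_dvd_mul dvd_rfl h1).mul_right _)

theorem rz_evaldeg {F : Type*} [Field F] (g : F[X][X]) (C : ℕ) (hg : g.natDegree ≤ C) :
    ∃ K : ℕ, ∀ A : F[X], (g.eval A).natDegree ≤ C * A.natDegree + K := by
  refine ⟨g.support.sup (fun i => (g.coeff i).natDegree), fun A => ?_⟩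
  rw [eval_eq_sum, sum_def]
  apply natDegree_sum_le_of_forall_le
  intro i hi
  refine natDegree_mul_le.trans ?_
  have h1 : (g.coeff i).natDegree ≤ g.support.sup (fun i => (g.coeff i).natDegree) :=
    Finset.le_sup (f := fun i => (g.coeff i).natDegree) hi
  have h2 : (A ^ i).natDegree ≤ C * A.natDegree :=
    natDegree_pow_le.trans (Nat.mul_le_mul_right _ ((le_natDegree_of_mem_supp i hi).trans hg))
  omega

theorem rz_stage2 {F : Type*} [Field F] [Fintype F] (f : F[X] → F[X])
    (hcong : ∀ A B P : F[X], Irreducible P → P ∣ f (A + B * P) - f A)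
    (c c' D : ℕ) (hlin : ∀ A : F[X], D ≤ A.natDegree →
      (f A).natDegree ≤ c * A.natDegree + c') :
    ∃ G : Polynomial (RatFunc F), ∀ A : F[X],
      Polynomial.eval (algebraMap F[X] (RatFunc F) A) G = algebraMap F[X] (RatFunc F) (f A) := by
  classical
  obtain ⟨s, hs⟩ := Infinite.exists_subset_card_eq F[X] (c + 1)
  set K := RatFunc F
  have hinj : Function.Injective (algebraMap F[X] K) := IsFractionRing.injective F[X] K
  set G : K[X] := Lagrange.interpolate s (algebraMap F[X] K) (fun a => algebraMap F[X] K (f a)) with hG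
  have hGdeg : G.degree < (c + 1 : ℕ) := by
    rw [← hs]; exact Lagrange.degree_interpolate_lt _ hinj.injOn
  have hGev : ∀ a ∈ s, G.eval (algebraMap F[X] K a) = algebraMap F[X] K (f a) := fun a ha =>
    Lagrange.eval_interpolate_at_node _ hinj.injOn ha
  refine ⟨G, ?_⟩
  obtain ⟨V, hV, hVG⟩ := IsLocalization.integerNormalization_spec (nonZeroDivisors F[X]) G
  have hV0 : V ≠ 0 := nonZeroDivisors.ne_zero hV
  set g := IsLocalization.integerNormalization (nonZeroDivisors F[X]) G with hg
  have hgdeg : g.natDegree ≤ c := by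
    rw [natDegree_le_iff_coeff_eq_zero]
    intro N hN
    apply hinj
    rw [← coeff_map, hVG, coeff_smul, map_zero, coeff_eq_zero_of_degree_lt, smul_zero]
    exact hGdeg.trans_le (by exact_mod_cast hN)
  have hgev : ∀ A, algebraMap F[X] K (g.eval A) = algebraMap F[X] K V * G.eval (algebraMap F[X] K A) := by
    intro A
    rw [← eval_map_apply, hVG, Algebra.smul_def, Polynomial.algebraMap_apply, eval_mul, eval_C]
  -- reduced function
  let h : F[X] → F[X] := fun A => V * f A - g.eval A
  have hh : ∀ A, h A = 0 → G.eval (algebraMap F[X] K A) = algebraMap F[X] K (f A) := by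
    intro A hA
    have h1 : V * f A = g.eval A := sub_eq_zero.mp hA
    have h2 := hgev A
    rw [← h1, map_mul] at h2
    exact (mul_left_cancel₀ (by simpa using hV0) h2).symm
  have hhs : ∀ a ∈ s, h a = 0 := by
    intro a ha
    apply hinj
    simp only [h, map_sub, map_mul, map_zero, hgev, hGev a ha, sub_self]
  have hhc : ∀ A B P : F[X], Irreducible P → P ∣ A - B → P ∣ h A - h B := by
    intro A B P hP ⟨Q, hQ⟩
    have h1 := hcong B Q P hP
    have h2 : B + Q * P = A := by linear_combination -hQ
    rw [h2] at h1
    have h3 : P ∣ g.eval A - g.eval B := (Dvd.intro _ hQ.symm).trans (sub_dvd_eval_sub A B g)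
    have h4 : h A - h B = V * (f A - f B) - (g.eval A - g.eval B) := by simp only [h]; ring
    rw [h4]
    exact dvd_sub (h1.mul_left V) h3
  intro B
  apply hh
  by_contra hB
  set q := Fintype.card F with hq
  have hq1 : 1 < q := Fintype.one_lt_card
  -- choose the derivative
  set m := (insert B s).sup (fun a => a.natDegree) with hm
  have hma : ∀ a ∈ insert B s, a.natDegree ≤ m := fun a ha =>
    Finset.le_sup (f := fun a : F[X] => a.natDegree) ha
  let T : F[X] := X ^ (q * (m + 1))
  have hT : ∀ a ∈ insert B s, T - derivative a ≠ 0 := by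
    intro a ha h0
    have h1 : T.natDegree = (derivative a).natDegree := by rw [sub_eq_zero.mp h0]
    have h2 := natDegree_derivative_le a
    have h3 := hma a ha
    have h4 : T.natDegree = q * (m + 1) := by simp [T]
    have h5 : m + 1 ≤ q * (m + 1) := Nat.le_mul_of_pos_left _ (by omega)
    omega
  obtain ⟨E, hE, hEd⟩ := rz_prod s (fun a => T - derivative a)
    (fun a ha => hT a (Finset.mem_insert_of_mem ha))
  obtain ⟨k, hk⟩ := rz_evaldeg g c hgdeg
  let r := D + m + 2 + V.natDegree + c' + k + E.natDegree + (h B).natDegree + (T - derivative B).natDegree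
  let A : F[X] := X ^ (q * r) + X ^ (q * (m + 1) + 1)
  have hAdeg : A.natDegree = q * r := by
    have hlt : q * (m + 1) + 1 < q * r := by
      have : m + 2 ≤ r := by simp only [r]; omega
      nlinarith
    simp only [A]
    rw [natDegree_add_eq_left_of_natDegree_lt]
    · simp
    · simpa using hlt
  have hAr : r ≤ A.natDegree := by rw [hAdeg]; nlinarith
  have hAder : derivative A = T := by
    simp [A, T, derivative_X_pow, hq]
  have hAa : ∀ a ∈ insert B s, (A - a).natDegree = A.natDegree := by
    intro a ha
    apply natDegree_sub_eq_left_of_natDegree_lt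
    have := hma a ha
    have : m + 2 ≤ r := by simp only [r]; omega
    omega
  have hrad : ∀ a ∈ insert B s, ∀ y, (∀ P, Irreducible P → P ∣ A - a → P ∣ y) →
      A - a ∣ y * (T - derivative a) := by
    intro a ha y hy
    have h1 := rz_rad (A - a) y hy
    rwa [derivative_sub, hAder] at h1
  have hA0 : h A = 0 := by
    by_contra hne
    have h1 := hEd A (h A) (by
      intro a ha
      apply hrad a (Finset.mem_insert_of_mem ha)
      intro P hP hPd
      have := hhc A a P hP hPd
      rwa [hhs a ha, sub_zero] at this)
    have h2 := natDegree_le_of_dvd h1 (mul_ne_zero hne hE)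
    rw [natDegree_prod, Finset.sum_congr rfl (fun a ha => hAa a (Finset.mem_insert_of_mem ha)),
      Finset.sum_const, hs, smul_eq_mul, natDegree_mul hne hE] at h2
    · have h3 : (h A).natDegree ≤ V.natDegree + c * A.natDegree + c' + k := by
        refine (natDegree_sub_le _ _).trans (max_le ?_ ?_)
        · refine natDegree_mul_le.trans ?_
          have := hlin A (by simp only [r] at hAr; omega)
          omega
        · have := hk A
          omega
      have : (c + 1) * A.natDegree = c * A.natDegree + A.natDegree := by ring
      simp only [r] at hAr
      omega
    · intro a ha h0
      have := hAa a (Finset.mem_insert_of_mem ha)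
      rw [h0, natDegree_zero] at this
      simp only [r] at hAr
      omega
  have h5 := hrad B (Finset.mem_insert_self _ _) (h B) (by
    intro P hP hPd
    have := hhc A B P hP hPd
    rwa [hA0, zero_sub, dvd_neg] at this)
  have hTB := hT B (Finset.mem_insert_self _ _)
  have h6 := natDegree_le_of_dvd h5 (mul_ne_zero hB hTB)
  rw [hAa B (Finset.mem_insert_self _ _), natDegree_mul hB hTB] at h6
  simp only [r] at hAr
  omega

theorem rz_pow_mono (q d n : ℕ) (hq : 2 ≤ q) (hd : 1 ≤ d) (h : d ≤ n) : n * q ^ d ≤ d * q ^ n := by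
  induction n, h using Nat.le_induction with
  | base => exact le_rfl
  | succ n hn ih =>
    have : 0 < q ^ d := by positivity
    calc (n + 1) * q ^ d ≤ 2 * (n * q ^ d) := by nlinarith
      _ ≤ q * (d * q ^ n) := Nat.mul_le_mul hq ih
      _ = d * q ^ (n + 1) := by ring

theorem rz_lin_le_pow (q K : ℕ) (hq : 2 ≤ q) : ∃ n1, ∀ n, n1 ≤ n → K * n ≤ q ^ n := by
  have h := tendsto_pow_const_div_const_pow_of_one_lt 1 (r := (q : ℝ)) (by exact_mod_cast hq)
  have h2 := h.eventually (gt_mem_nhds (show (0 : ℝ) < 1 / (K + 1) by positivity))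
  obtain ⟨n1, hn1⟩ := Filter.eventually_atTop.mp h2
  refine ⟨n1, fun n hn => ?_⟩
  have h3 := hn1 n hn
  have h4 : (0 : ℝ) < (q : ℝ) ^ n := by positivity
  rw [pow_one, div_lt_div_iff₀ h4 (by positivity)] at h3
  have h5 : (K * n : ℝ) ≤ q ^ n := by nlinarith [(Nat.cast_nonneg n : (0 : ℝ) ≤ n)]
  exact_mod_cast h5

theorem rz_bound {F : Type*} [Field F] [Fintype F] (q : ℕ) (hq : q = Fintype.card F)
    (f : F[X] → F[X])
    (hdeg : ∃ N : ℕ, ∀ A : F[X], N ≤ A.natDegree →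
      ((f A).natDegree : ℝ) < (q : ℝ) ^ A.natDegree / (27 * (q : ℝ) * (A.natDegree : ℝ))) :
    ∃ n1, ∀ n, n1 ≤ n → ∀ A : F[X], A.natDegree ≤ n → 27 * q * n * (f A).natDegree ≤ q ^ n := by
  classical
  have hq2 : 2 ≤ q := hq ▸ Fintype.one_lt_card
  obtain ⟨N, hN⟩ := hdeg
  have hfin : {A : F[X] | A.degree < (N + 1 : ℕ)}.Finite := by
    have : Finite (degreeLT F (N + 1)) := Finite.of_equiv _ (degreeLTEquiv F (N + 1)).toEquiv.symm
    have h2 := Set.toFinite (degreeLT F (N + 1) : Set F[X])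
    refine h2.subset ?_
    intro A hA
    exact mem_degreeLT.mpr hA
  obtain ⟨c, hc⟩ := (hfin.image (fun A => (f A).natDegree)).bddAbove
  obtain ⟨n1, hn1⟩ := rz_lin_le_pow q (27 * q * c) hq2
  refine ⟨n1, fun n hn A hA => ?_⟩
  by_cases hAN : A.natDegree < N + 1
  · have h1 : (f A).natDegree ≤ c := hc ⟨A, by
      show A.degree < (N + 1 : ℕ)
      exact degree_le_natDegree.trans_lt (by exact_mod_cast hAN), rfl⟩
    calc 27 * q * n * (f A).natDegree ≤ 27 * q * n * c := Nat.mul_le_mul_left _ h1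
      _ = 27 * q * c * n := by ring
      _ ≤ _ := hn1 n hn
  · have h1 := hN A (by omega)
    set d := A.natDegree with hd
    have hd1 : 1 ≤ d := by omega
    have h0 : (0 : ℝ) < 27 * q * d := by
      have : (0 : ℝ) < d := by exact_mod_cast hd1
      have : (0 : ℝ) < q := by exact_mod_cast (by omega : 0 < q)
      positivity
    rw [lt_div_iff₀ h0] at h1
    have h2 : (f A).natDegree * (27 * q * d) < q ^ d := by exact_mod_cast h1
    have h3 := rz_pow_mono q d n hq2 hd1 hA
    apply Nat.le_of_mul_le_mul_left _ hd1
    calc d * (27 * q * n * (f A).natDegree) = n * ((f A).natDegree * (27 * q * d)) := by ring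
      _ ≤ n * q ^ d := Nat.mul_le_mul_left _ h2.le
      _ ≤ _ := h3

/-- auxiliary polynomial value -/
noncomputable def rzQ {F : Type*} [Field F] {I J : ℕ} (a : Fin I × Fin J → F[X]) (A Y : F[X]) : F[X] :=
  ∑ i, a i * A ^ (i.1 : ℕ) * Y ^ (i.2 : ℕ)

theorem rzQ_congr {F : Type*} [Field F] {I J : ℕ} (a : Fin I × Fin J → F[X]) (A Y A' Y' P : F[X])
    (h1 : P ∣ A - A') (h2 : P ∣ Y - Y') : P ∣ rzQ a A Y - rzQ a A' Y' := by
  unfold rzQ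
  rw [← Finset.sum_sub_distrib]
  apply Finset.dvd_sum
  intro i _
  have h3 : P ∣ A ^ (i.1 : ℕ) - A' ^ (i.1 : ℕ) := h1.trans (sub_dvd_pow_sub_pow _ _ _)
  have h4 : P ∣ Y ^ (i.2 : ℕ) - Y' ^ (i.2 : ℕ) := h2.trans (sub_dvd_pow_sub_pow _ _ _)
  have : a i * A ^ (i.1 : ℕ) * Y ^ (i.2 : ℕ) - a i * A' ^ (i.1 : ℕ) * Y' ^ (i.2 : ℕ)
     = (A ^ (i.1 : ℕ) - A' ^ (i.1 : ℕ)) * (a i * Y ^ (i.2 : ℕ)) +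
       (Y ^ (i.2 : ℕ) - Y' ^ (i.2 : ℕ)) * (a i * A' ^ (i.1 : ℕ)) := by ring
  rw [this]
  exact dvd_add (h3.mul_right _) (h4.mul_right _)

theorem rzQ_deg {F : Type*} [Field F] {I J H : ℕ} (a : Fin I × Fin J → F[X])
    (ha : ∀ i, (a i).natDegree < H) (A Y : F[X]) (hI : 0 < I) (hJ : 0 < J) :
    (rzQ a A Y).natDegree < H + I * A.natDegree + J * Y.natDegree := by
  have hH : 0 < H := (Nat.zero_le _).trans_lt (ha (⟨0, hI⟩, ⟨0, hJ⟩))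
  have : (rzQ a A Y).natDegree ≤ H - 1 + I * A.natDegree + J * Y.natDegree := by
    apply natDegree_sum_le_of_forall_le
    intro i _
    refine natDegree_mul_le.trans (Nat.add_le_add (natDegree_mul_le.trans (Nat.add_le_add ?_ ?_)) ?_)
    · have := ha i; omega
    · exact natDegree_pow_le.trans (Nat.mul_le_mul_right _ i.1.2.le)
    · exact natDegree_pow_le.trans (Nat.mul_le_mul_right _ i.2.2.le)
  omega

theorem rz_siegel {F : Type*} [Field F] [Fintype F] (f : F[X] → F[X]) (I J H n E : ℕ)
    (hc : Fintype.card F ^ n * E < I * J * H) :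
    ∃ a : Fin I × Fin J → F[X], a ≠ 0 ∧ (∀ i, a i ∈ degreeLT F H) ∧
      ∀ A ∈ degreeLT F n, ∀ k < E, (rzQ a A (f A)).coeff k = 0 := by
  let L : (Fin I × Fin J → degreeLT F H) →ₗ[F] ((Fin n → F) × Fin E → F) :=
    { toFun := fun a w => (rzQ (fun i => (a i : F[X])) ((degreeLTEquiv F n).symm w.1 : F[X])
          (f ((degreeLTEquiv F n).symm w.1 : F[X]))).coeff w.2
      map_add' := by
        intro a b
        ext w
        simp only [rzQ, Pi.add_apply, Submodule.coe_add, add_mul, Finset.sum_add_distrib, coeff_add]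
      map_smul' := by
        intro c a
        ext w
        simp only [rzQ, Pi.smul_apply, Submodule.coe_smul, smul_mul_assoc, ← Finset.smul_sum,
          coeff_smul, RingHom.id_apply] }
  have e := degreeLTEquiv F H
  have : FiniteDimensional F (degreeLT F H) := Module.Finite.equiv e.symm
  have hker : LinearMap.ker L ≠ ⊥ := by
    apply LinearMap.ker_ne_bot_of_finrank_lt
    rw [Module.finrank_pi_fintype F (M := fun _ : Fin I × Fin J => degreeLT F H), Finset.sum_const,
      e.finrank_eq]
    simpa using hc
  obtain ⟨a, haL, ha0⟩ := (Submodule.ne_bot_iff _).mp hker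
  refine ⟨fun i => (a i : F[X]), ?_, fun i => (a i).2, ?_⟩
  · intro h0
    apply ha0
    ext i : 2
    simpa using congrFun h0 i
  · intro A hA k hk
    have h1 := congrFun (LinearMap.mem_ker.mp haL) (degreeLTEquiv F n ⟨A, hA⟩, ⟨k, hk⟩)
    simpa [L] using h1

theorem rz_vanish {F : Type*} [Field F] [Fintype F] (f : F[X] → F[X])
    (hcong : ∀ A B P : F[X], Irreducible P → P ∣ f (A + B * P) - f A)
    {I J : ℕ} (a : Fin I × Fin J → F[X]) (n : ℕ) (hn : 1 ≤ n)
    (h0 : ∀ A ∈ degreeLT F n, rzQ a A (f A) = 0)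
    (hd : ∀ m, n ≤ m → ∀ A : F[X], A.natDegree ≤ m → (rzQ a A (f A)).natDegree < Fintype.card F ^ m) :
    ∀ A, rzQ a A (f A) = 0 := by
  have key : ∀ m, n ≤ m → ∀ A ∈ degreeLT F m, rzQ a A (f A) = 0 := by
    intro m hm
    induction m, hm using Nat.le_induction with
    | base => exact h0
    | succ m hm ih =>
      intro A hA
      apply rz_small m (by omega)
      · intro P hP hPm
        have h1 : A % P ∈ degreeLT F m := by
          rw [mem_degreeLT]
          refine (degree_mod_lt A hP.ne_zero).trans_le ?_
          exact degree_le_natDegree.trans (by exact_mod_cast hPm)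
        have h2 := ih _ h1
        have h3 : A % P + (A / P) * P = A := by
          rw [mul_comm]; exact EuclideanDomain.mod_add_div A P
        have h4 := hcong (A % P) (A / P) P hP
        rw [h3] at h4
        have h5 := rzQ_congr a A (f A) (A % P) (f (A % P)) P
          ⟨A / P, by linear_combination -h3⟩ h4
        rwa [h2, sub_zero] at h5
      · apply hd m hm A
        rw [mem_degreeLT] at hA
        by_cases hz : A = 0
        · simp [hz]
        · have := (natDegree_lt_iff_degree_lt hz).mpr hA
          omega
  intro A
  refine key (n + A.natDegree + 1) (by omega) A ?_
  rw [mem_degreeLT]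
  exact degree_le_natDegree.trans_lt (by exact_mod_cast (by omega))

theorem rz_alg {F : Type*} [Field F] (f : F[X] → F[X])
    {I J : ℕ} (a : Fin I × Fin J → F[X]) (ha : a ≠ 0)
    (h0 : ∀ A, rzQ a A (f A) = 0) :
    ∃ c c' D : ℕ, ∀ A : F[X], D ≤ A.natDegree → (f A).natDegree ≤ c * A.natDegree + c' := by
  classical
  let b : Fin J → F[X][X] := fun j => ∑ i, C (a (i, j)) * X ^ (i : ℕ)
  have hbc : ∀ j i, (b j).coeff (i : Fin I) = a (i, j) := by
    intro j i
    simp only [b, finsetSum_coeff, coeff_C_mul_X_pow]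
    rw [Finset.sum_eq_single i]
    · simp
    · intro i' _ hne
      rw [if_neg]
      intro h
      exact hne (Fin.ext h.symm)
    · simp
  have hbd : ∀ j, (b j).natDegree ≤ I := by
    intro j
    apply natDegree_sum_le_of_forall_le
    intro i _
    exact (natDegree_C_mul_X_pow_le _ _).trans i.2.le
  have hbQ : ∀ A Y, rzQ a A Y = ∑ j, (b j).eval A * Y ^ (j : ℕ) := by
    intro A Y
    simp only [rzQ, b, eval_finsetSum, eval_mul, eval_C, eval_pow, eval_X, Finset.sum_mul]
    rw [Fintype.sum_prod_type, Finset.sum_comm]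
  choose k hk using fun j => rz_evaldeg (b j) I (hbd j)
  set S := Finset.univ.filter (fun j => b j ≠ 0) with hS
  have hSn : S.Nonempty := by
    by_contra hne
    apply ha
    ext1 ⟨i, j⟩
    rw [← hbc j i]
    have : b j = 0 := by
      by_contra hbj
      exact hne ⟨j, by simp [hS, hbj]⟩
    simp [this]
  obtain ⟨j0, hj0, hmax⟩ := S.exists_max_image id hSn
  have hbj0 : b j0 ≠ 0 := by simpa [hS] using hj0
  have hmax' : ∀ j, j0 < j → b j = 0 := by
    intro j hj
    by_contra hne
    exact absurd (hmax j (by simp [hS, hne])) (not_le.mpr hj)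
  refine ⟨I, ∑ j, k j, (b j0).roots.toFinset.sup natDegree + 1, fun A hA => ?_⟩
  have hev : (b j0).eval A ≠ 0 := by
    intro hr
    have : A ∈ (b j0).roots.toFinset := by simp [hbj0, hr]
    have := Finset.le_sup (f := natDegree) this
    omega
  have h1 := h0 A
  rw [hbQ, ← Finset.add_sum_erase _ _ (Finset.mem_univ j0), add_eq_zero_iff_eq_neg] at h1
  set d := (f A).natDegree with hd
  set K := I * A.natDegree + ∑ j, k j with hK
  have hkK : ∀ j, ((b j).eval A).natDegree ≤ K := by
    intro j
    refine (hk j A).trans ?_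
    have := Finset.single_le_sum (f := k) (fun _ _ => Nat.zero_le _) (Finset.mem_univ j)
    omega
  by_contra hlt
  push Not at hlt
  have hfA : f A ≠ 0 := by
    intro h; rw [h, natDegree_zero] at hd; omega
  have h2 : ((b j0).eval A * f A ^ (j0 : ℕ)).natDegree = ((b j0).eval A).natDegree + j0 * d := by
    rw [natDegree_mul hev (pow_ne_zero _ hfA), natDegree_pow]
  rcases Nat.eq_zero_or_pos (j0 : ℕ) with hz | hpos
  · have : ∑ x ∈ Finset.univ.erase j0, (b x).eval A * f A ^ (x : ℕ) = 0 := by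
      apply Finset.sum_eq_zero
      intro j hj
      rw [hmax' j (by
        have := Finset.ne_of_mem_erase hj
        rw [Fin.lt_def]
        have : (j : ℕ) ≠ j0 := fun h => this (Fin.ext h)
        omega)]
      simp
    rw [this, hz] at h1
    apply hev
    simpa using h1
  · have h3 : (∑ x ∈ Finset.univ.erase j0, (b x).eval A * f A ^ (x : ℕ)).natDegree ≤ K + (j0 - 1) * d := by
      apply natDegree_sum_le_of_forall_le
      intro j hj
      have hne := Finset.ne_of_mem_erase hj
      rcases lt_or_gt_of_ne hne with hl | hg
      · refine natDegree_mul_le.trans (Nat.add_le_add (hkK j) (natDegree_pow_le.trans ?_))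
        apply Nat.mul_le_mul_right
        rw [Fin.lt_def] at hl
        omega
      · rw [hmax' j hg]; simp
    have h4 := congrArg natDegree h1
    rw [h2, natDegree_neg] at h4
    have h5 : (j0 : ℕ) * d = (j0 - 1) * d + d := by
      obtain ⟨t, ht⟩ := Nat.exists_eq_succ_of_ne_zero hpos.ne'
      rw [ht]; simp [Nat.succ_mul]
    omega

/-- **Theorem (main result).** Let `𝔽` be the finite field of order `q`, `𝒜 = 𝔽[t]`,
`𝒦 = 𝔽(t)`. If `f : 𝒜 → 𝒜` satisfies `f(A + B·P) ≡ f(A) mod P` for all `A, B ∈ 𝒜` and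
irreducible `P`, and `deg(f(A)) < q^{deg A} / (27 q deg A)` for all `A` of sufficiently
large degree, then `f` is a polynomial map, i.e. given by an element of `𝒦[X]`. -/
theorem ruzsa_polynomial_main {F : Type*} [Field F] [Fintype F]
    (q : ℕ) (hq : q = Fintype.card F)
    (f : F[X] → F[X])
    (hcong : ∀ A B P : F[X], Irreducible P → P ∣ f (A + B * P) - f A)
    (hdeg : ∃ N : ℕ, ∀ A : F[X], N ≤ A.natDegree →
      ((f A).natDegree : ℝ) < (q : ℝ) ^ A.natDegree / (27 * (q : ℝ) * (A.natDegree : ℝ))) :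
    ∃ G : Polynomial (RatFunc F), ∀ A : F[X],
      Polynomial.eval (algebraMap F[X] (RatFunc F) A) G = algebraMap F[X] (RatFunc F) (f A) := by
  have hq2 : 2 ≤ q := hq ▸ Fintype.one_lt_card
  obtain ⟨n1, hn1⟩ := rz_bound q hq f hdeg
  obtain ⟨n2, hn2⟩ := rz_lin_le_pow q 12 hq2
  set n := n1 + n2 + 1 with hn
  have h12 := hn2 n (by omega)
  set T := q ^ n with hT
  set I := T / (3 * n) with hI
  set H := T / 3 with hH
  set J := 9 * q * n with hJ
  have hn0 : 1 ≤ n := by omega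
  have hI1 : I * (3 * n) ≤ T := Nat.div_mul_le_self _ _
  have hI2 : T < I * (3 * n) + 3 * n := by
    have := Nat.lt_div_mul_add (a := T) (b := 3 * n) (by omega)
    exact this
  have hH1 : 3 * H ≤ T := by omega
  have hH2 : T < 3 * H + 3 := by omega
  have hIpos : 0 < I := Nat.div_pos (by omega) (by omega)
  have hJpos : 0 < J := by positivity
  have hcount : T * T < I * J * H := by
    have e1 : 3 * T ≤ 4 * (I * (3 * n)) := by omega
    have e2 : 3 * T ≤ 4 * (3 * H) := by omega
    have e3 := Nat.mul_le_mul e1 e2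
    have e4 : I * J * H = q * ((I * (3 * n)) * (3 * H)) := by rw [hJ]; ring
    have e5 : 2 * ((I * (3 * n)) * (3 * H)) ≤ I * J * H := by
      rw [e4]; exact Nat.mul_le_mul_right _ hq2
    have e6 : 0 < T * T := by positivity
    nlinarith
  obtain ⟨a, ha0, haH, haV⟩ := rz_siegel f I J H n T (by rw [← hq]; exact hcount)
  have hHpos : 0 < H := by omega
  have haH' : ∀ i, (a i).natDegree < H := by
    intro i
    by_cases hz : a i = 0
    · rw [hz, natDegree_zero]; exact hHpos
    · exact (natDegree_lt_iff_degree_lt hz).mpr (mem_degreeLT.mp (haH i))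
  have hd : ∀ m, n ≤ m → ∀ A : F[X], A.natDegree ≤ m → (rzQ a A (f A)).natDegree < q ^ m := by
    intro m hm A hA
    refine (rzQ_deg a haH' A (f A) hIpos hJpos).trans_le ?_
    have e1 := hn1 m (by omega) A hA
    have e2 := rz_pow_mono q n m hq2 hn0 hm
    have e3 : T ≤ q ^ m := Nat.pow_le_pow_right (by omega) hm
    have e4 : 3 * (J * (f A).natDegree) ≤ q ^ m := by
      refine le_trans ?_ e1
      calc 3 * (J * (f A).natDegree) = 27 * q * n * (f A).natDegree := by rw [hJ]; ring
        _ ≤ _ := by gcongr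
    have e5 : 3 * (I * A.natDegree) ≤ q ^ m := by
      apply Nat.le_of_mul_le_mul_left _ hn0
      calc n * (3 * (I * A.natDegree)) = (I * (3 * n)) * A.natDegree := by ring
        _ ≤ T * m := Nat.mul_le_mul hI1 hA
        _ = m * q ^ n := mul_comm _ _
        _ ≤ _ := e2
    omega
  have hv : ∀ A ∈ degreeLT F n, rzQ a A (f A) = 0 := by
    intro A hA
    ext k
    rw [coeff_zero]
    by_cases hk : k < T
    · exact haV A hA k hk
    · apply coeff_eq_zero_of_natDegree_lt
      refine (hd n le_rfl A ?_).trans_le (by omega)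
      rw [mem_degreeLT] at hA
      exact natDegree_le_of_degree_le hA.le
  have hall := rz_vanish f hcong a n hn0 hv (by rw [← hq]; exact hd)
  obtain ⟨c, c', D, hl⟩ := rz_alg f a ha0 hall
  exact rz_stage2 f hcong c c' D hl
end

section
/- Let g : 𝒜 → 𝒜 and suppose there exists C₁ ∈ ℕ₀ such that the following three properties hold: (a) g(A + B·P) ≡ g(A) (mod P) for every A, B ∈ 𝒜 and every irreducible P ∈ 𝒫; (b) deg(g(A)) ≤ q^{deg(A)} − 1 for every A ∈ 𝒜 with deg(A) > C₁; (c) g(A) = 0 for every A ∈ 𝒜 with deg(A) ≤ C₁. Then g is identically 0. -/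
open Polynomial

theorem dvd_of_squarefree_of_irreducible_dvd {F : Type*} [Field F] (Q y : F[X])
    (h0 : Q ≠ 0) (hs : Squarefree Q)
    (h : ∀ P : F[X], Irreducible P → P ∣ Q → P ∣ y) : Q ∣ y := by
  classical
  obtain ⟨c, hc⟩ := EuclideanDomain.gcd_dvd_left Q y
  have hc0 : c ≠ 0 := by
    rintro rfl
    exact h0 (by rw [hc, mul_zero])
  have hu : IsUnit c := by
    by_contra hu
    obtain ⟨P, hP, hPc⟩ := WfDvdMonoid.exists_irreducible_factor hu hc0
    have hPQ : P ∣ Q := by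
      rw [hc]
      exact hPc.mul_left _
    have hPg : P ∣ EuclideanDomain.gcd Q y := EuclideanDomain.dvd_gcd hPQ (h P hP hPQ)
    refine hP.not_isUnit (hs P ?_)
    rw [hc]
    exact mul_dvd_mul hPg hPc
  have h1 : Q ∣ EuclideanDomain.gcd Q y := by
    obtain ⟨u, rfl⟩ := hu
    exact ⟨((u⁻¹ : F[X]ˣ) : F[X]), (Units.eq_mul_inv_iff_mul_eq u).mpr hc.symm⟩
  exact h1.trans (EuclideanDomain.gcd_dvd_right Q y)

/-- If `g : 𝒜 → 𝒜` satisfies (a) `g(A + B·P) ≡ g(A) mod P` for all `A, B` and irreducible `P`,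
(b) `deg(g(A)) ≤ q^{deg A} - 1` whenever `deg A > C₁`, and (c) `g(A) = 0` whenever
`deg A ≤ C₁`, then `g` is identically zero. -/
theorem ruzsa_polynomial_vanishing_lemma {F : Type*} [Field F] [Fintype F]
    (q : ℕ) (hq : q = Fintype.card F)
    (g : F[X] → F[X]) (C₁ : ℕ)
    (ha : ∀ A B P : F[X], Irreducible P → P ∣ g (A + B * P) - g A)
    (hb : ∀ A : F[X], C₁ < A.natDegree → (g A).natDegree ≤ q ^ A.natDegree - 1)
    (hc : ∀ A : F[X], A.natDegree ≤ C₁ → g A = 0) :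
    ∀ A : F[X], g A = 0 := by
  intro A
  induction hn : A.natDegree using Nat.strong_induction_on generalizing A with
  | _ n ih =>
  by_cases hA : A.natDegree ≤ C₁
  · exact hc A hA
  push Not at hA
  have hn0 : n ≠ 0 := by omega
  have hq1 : 1 < q := hq ▸ Fintype.one_lt_card
  have hQ0 : (X ^ q ^ n - X : F[X]) ≠ 0 := FiniteField.X_pow_card_pow_sub_X_ne_zero F hn0 hq1
  have hdeg : (X ^ q ^ n - X : F[X]).natDegree = q ^ n :=
    FiniteField.X_pow_card_pow_sub_X_natDegree_eq F hn0 hq1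
  have hsep : (X ^ q ^ n - X : F[X]).Separable := by
    refine galois_poly_separable (ringChar F) _ (Dvd.dvd.trans ?_ (dvd_pow_self q hn0))
    rw [hq]
    exact (CharP.cast_eq_zero_iff F (ringChar F) _).mp (Nat.cast_card_eq_zero F)
  have hdvd : (X ^ q ^ n - X : F[X]) ∣ g A := by
    refine dvd_of_squarefree_of_irreducible_dvd _ _ hQ0 hsep.squarefree ?_
    intro P hP hPQ
    have hPn : P.natDegree ∣ n := by
      refine hP.natDegree_dvd_of_dvd_X_pow_card_pow_sub_X ?_
      rwa [Nat.card_eq_fintype_card, ← hq]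
    have hle := Nat.le_of_dvd (Nat.pos_of_ne_zero hn0) hPn
    have hlt : (A % P).natDegree < P.natDegree := natDegree_mod_lt A hP.natDegree_pos.ne'
    have h := ha (A % P) (A / P) P hP
    rw [ih _ (hlt.trans_le hle) (A % P) rfl, sub_zero, mul_comm, EuclideanDomain.mod_add_div] at h
    exact h
  by_contra hg
  have h1 := natDegree_le_of_dvd hdvd hg
  have h2 := hb A hA
  rw [hdeg] at h1
  rw [hn] at h2
  have h3 : 0 < q ^ n := by positivity
  omega
end

section
/- Let f : 𝒜 → 𝒜 satisfy f(A + B·P) ≡ f(A) (mod P) for every A, B ∈ 𝒜 and every irreducible P ∈ 𝒫, and suppose that deg(f(A)) < q^{deg(A)} / (27·q·deg(A)) whenever deg(A) is sufficiently large. Then there exists a nonzero polynomial Q(X, Y) ∈ 𝒜[X, Y] such that Q(A, f(A)) = 0 for every A ∈ 𝒜. -/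
open Polynomial

namespace RuzsaAux

lemma squarefree_dvd {F : Type*} [Field F] {s g : F[X]} (hs : Squarefree s)
    (h : ∀ P : F[X], Irreducible P → P ∣ s → P ∣ g) : s ∣ g := by
  classical
  by_cases hg : g = 0
  · simp [hg]
  have hs0 : s ≠ 0 := hs.ne_zero
  refine (hs.isRadical.dvd_radical hs0).trans ?_
  rw [UniqueFactorizationMonoid.radical_dvd_iff_primeFactors_subset hg]
  intro P hP
  rw [UniqueFactorizationMonoid.mem_primeFactors,
    UniqueFactorizationMonoid.mem_normalizedFactors_iff' hs0] at hP
  rw [UniqueFactorizationMonoid.mem_primeFactors,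
    UniqueFactorizationMonoid.mem_normalizedFactors_iff' hg]
  exact ⟨hP.1, hP.2.1, h P hP.1 hP.2.2⟩

lemma eq_zero_of_forall_dvd {F : Type*} [Field F] [Fintype F] {g : F[X]} {m : ℕ} (hm : m ≠ 0)
    (hdeg : g.natDegree < Fintype.card F ^ m)
    (h : ∀ P : F[X], Irreducible P → P.natDegree ≤ m → P ∣ g) : g = 0 := by
  by_contra hg
  have hc : 1 < Fintype.card F := Fintype.one_lt_card
  have hd : (X ^ Fintype.card F ^ m - X : F[X]) ∣ g := by
    apply squarefree_dvd
    · obtain ⟨p, hp⟩ := CharP.exists F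
      apply Separable.squarefree
      apply galois_poly_separable p
      apply dvd_pow _ hm
      rw [← CharP.cast_eq_zero_iff F p]
      simp
    · intro P hP hPd
      apply h P hP
      rw [← Nat.card_eq_fintype_card] at hPd
      exact Nat.le_of_dvd (Nat.pos_of_ne_zero hm)
        (hP.natDegree_dvd_of_dvd_X_pow_card_pow_sub_X hPd)
  have := natDegree_le_of_dvd hd hg
  rw [FiniteField.X_pow_card_pow_sub_X_natDegree_eq F hm hc] at this
  omega

lemma mul_le_pow_mono {q : ℕ} (hq : 2 ≤ q) {I M m : ℕ} (hM : 1 ≤ M) (hm : M ≤ m)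
    (h : M * I ≤ q ^ M) : m * I ≤ q ^ m := by
  induction m, hm using Nat.le_induction with
  | base => exact h
  | succ n hn ih =>
    have : I ≤ n * I := Nat.le_mul_of_pos_left _ (by omega)
    have h2 : q ^ n * 2 ≤ q ^ n * q := Nat.mul_le_mul_left _ hq
    rw [pow_succ]
    nlinarith

lemma exists_mul_le_pow {q : ℕ} (hq : 2 ≤ q) (K : ℕ) : ∃ M0, ∀ m, M0 ≤ m → m * K ≤ q ^ m := by
  have h4 : ∀ m, 4 ≤ m → m * m ≤ 2 ^ m := by
    intro m hm
    induction m, hm using Nat.le_induction with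
    | base => norm_num
    | succ n hn ih => rw [pow_succ]; nlinarith
  refine ⟨max 4 K, fun m hm => ?_⟩
  have h1 : 4 ≤ m := le_trans (le_max_left _ _) hm
  have h2 : K ≤ m := le_trans (le_max_right _ _) hm
  calc m * K ≤ m * m := Nat.mul_le_mul_left _ h2
    _ ≤ 2 ^ m := h4 m h1
    _ ≤ q ^ m := Nat.pow_le_pow_left hq m

lemma params {q M : ℕ} (hq : 2 ≤ q) (hM : 1 ≤ M) (h : M * 12 ≤ q ^ M) :
    ∃ D I : ℕ, 3 * D ≤ q ^ M ∧ 3 * (M * I) ≤ q ^ M ∧ q ^ M * q ^ M < I * (9 * q * M) * D := by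
  refine ⟨q ^ M / 3, q ^ M / (3 * M), Nat.mul_div_le _ _, ?_, ?_⟩
  · rw [← mul_assoc]; exact Nat.mul_div_le _ _
  · set Z := q ^ M
    set D := Z / 3
    set I := Z / (3 * M)
    have h1 : Z < 3 * D + 3 := by omega
    have h2 : Z < 3 * M * I + 3 * M := by
      have := Nat.lt_mul_div_succ Z (show 0 < 3 * M by omega)
      simpa [mul_add] using this
    have h3 : 3 * Z ≤ 4 * (3 * D) := by omega
    have h4 : 3 * Z ≤ 4 * (3 * M * I) := by omega
    have h5 : (3 * Z) * (3 * Z) ≤ (4 * (3 * D)) * (4 * (3 * M * I)) := Nat.mul_le_mul h3 h4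
    have hZ : 0 < Z := by omega
    have h6 : (3 * D) * (3 * M * I) * 2 ≤ (3 * D) * (3 * M * I) * q := Nat.mul_le_mul_left _ hq
    have h7 : I * (9 * q * M) * D = (3 * D) * (3 * M * I) * q := by ring
    rw [h7]
    have : 0 < Z * Z := Nat.mul_pos hZ hZ
    nlinarith

lemma degree_bound {F : Type*} [Field F] [Fintype F] (f : F[X] → F[X])
    (hdeg : ∃ N : ℕ, ∀ A : F[X], N ≤ A.natDegree →
      ((f A).natDegree : ℝ) < (Fintype.card F : ℝ) ^ A.natDegree /
        (27 * (Fintype.card F : ℝ) * (A.natDegree : ℝ))) :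
    ∃ M0, ∀ m, M0 ≤ m → ∀ A : F[X], A.natDegree ≤ m →
      m * (27 * Fintype.card F * (f A).natDegree) ≤ Fintype.card F ^ m := by
  obtain ⟨N, hN⟩ := hdeg
  have hq : 2 ≤ Fintype.card F := Fintype.one_lt_card
  set q := Fintype.card F with hqdef
  have hfin : Set.Finite {A : F[X] | A.natDegree < N + 1} := by
    have : Set.Finite ((degreeLT F (N+1) : Submodule F F[X]) : Set F[X]) := by
      have : Finite (degreeLT F (N+1)) := Finite.of_equiv _ (degreeLTEquiv F (N+1)).toEquiv.symm
      exact Set.toFinite _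
    refine this.subset fun A hA => ?_
    rw [SetLike.mem_coe, mem_degreeLT]
    exact lt_of_le_of_lt degree_le_natDegree (by exact_mod_cast hA)
  obtain ⟨C, hC⟩ := (hfin.image (fun A => (f A).natDegree)).bddAbove
  obtain ⟨M0, hM0⟩ := exists_mul_le_pow hq (27 * q * C)
  refine ⟨M0, fun m hm A hA => ?_⟩
  by_cases h : A.natDegree < N + 1
  · have : (f A).natDegree ≤ C := hC ⟨A, h, rfl⟩
    exact le_trans (by gcongr) (hM0 m hm)
  · have h1 : 1 ≤ A.natDegree := by omega
    have h2 := hN A (by omega)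
    apply mul_le_pow_mono hq h1 hA
    rw [lt_div_iff₀ (by positivity)] at h2
    have h3 : (f A).natDegree * (27 * q * A.natDegree) < q ^ A.natDegree := by exact_mod_cast h2
    nlinarith

end RuzsaAux

open RuzsaAux in
/-- If `f : 𝒜 → 𝒜` satisfies the congruence condition and
`deg(f(A)) < q^{deg A} / (27 q deg A)` for all `A` of sufficiently large degree, then there
is a nonzero two-variable polynomial `Q ∈ 𝒜[X, Y]` with `Q(A, f(A)) = 0` for all `A ∈ 𝒜`. -/
theorem ruzsa_polynomial_algebraic_relation {F : Type*} [Field F] [Fintype F]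
    (q : ℕ) (hq : q = Fintype.card F)
    (f : F[X] → F[X])
    (hcong : ∀ A B P : F[X], Irreducible P → P ∣ f (A + B * P) - f A)
    (hdeg : ∃ N : ℕ, ∀ A : F[X], N ≤ A.natDegree →
      ((f A).natDegree : ℝ) < (q : ℝ) ^ A.natDegree / (27 * (q : ℝ) * (A.natDegree : ℝ))) :
    ∃ Q : MvPolynomial (Fin 2) F[X], Q ≠ 0 ∧
      ∀ A : F[X], MvPolynomial.eval ![A, f A] Q = 0 := by
  classical
  subst hq
  obtain ⟨M0, hM0⟩ := degree_bound f hdeg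
  have hq : 2 ≤ Fintype.card F := Fintype.one_lt_card
  obtain ⟨M1, hM1⟩ := exists_mul_le_pow hq 12
  obtain ⟨M, hMdef⟩ : ∃ M, M = M0 + M1 + 1 := ⟨_, rfl⟩
  have hM : 1 ≤ M := by omega
  obtain ⟨D, I, hD, hI, hDIJ⟩ := params hq hM (hM1 M (by omega))
  set q := Fintype.card F with hqdef
  obtain ⟨J, hJ⟩ : ∃ J, J = 9 * q * M := ⟨_, rfl⟩
  rw [← hJ] at hDIJ
  -- the evaluation of the auxiliary polynomial
  let G : (Fin I × Fin J → degreeLT F D) → F[X] → F[X] := fun p A =>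
    ∑ ij : Fin I × Fin J, (p ij : F[X]) * A ^ (ij.1 : ℕ) * f A ^ (ij.2 : ℕ)
  have hGdeg : ∀ p m A, M ≤ m → A.natDegree ≤ m → (G p A).natDegree < q ^ m := by
    intro p m A hm hA
    have hqm : 0 < q ^ m := by positivity
    refine lt_of_le_of_lt (b := q ^ m - 1) ?_ (by omega)
    apply natDegree_sum_le_of_forall_le
    rintro ⟨i, j⟩ -
    have hp : (p (i, j) : F[X]).natDegree + 1 ≤ D := by
      have hD0 : D ≠ 0 := by
        rintro rfl
        simp at hDIJ
      have := mem_degreeLT.1 (p (i, j)).2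
      by_cases hz : (p (i, j) : F[X]) = 0
      · rw [hz, natDegree_zero]
        omega
      · exact Nat.succ_le_of_lt ((natDegree_lt_iff_degree_lt hz).2 this)
    have h1 : ((p (i, j) : F[X]) * A ^ (i : ℕ) * f A ^ (j : ℕ)).natDegree ≤
        (p (i, j) : F[X]).natDegree + i * A.natDegree + j * (f A).natDegree := by
      refine natDegree_mul_le.trans (add_le_add (natDegree_mul_le.trans (add_le_add le_rfl ?_)) ?_)
      · exact natDegree_pow_le
      · exact natDegree_pow_le
    have h2 : 3 * D ≤ q ^ m := hD.trans (Nat.pow_le_pow_right (by omega) hm)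
    have h3 : m * (3 * I) ≤ q ^ m := mul_le_pow_mono hq hM hm (by linarith)
    have h4 := hM0 m (by omega) A hA
    have h5 : (i : ℕ) * A.natDegree ≤ I * m := Nat.mul_le_mul i.2.le hA
    have h6 : (j : ℕ) * (f A).natDegree ≤ 9 * q * m * (f A).natDegree := by
      apply Nat.mul_le_mul_right
      refine j.2.le.trans ?_
      rw [hJ]
      exact Nat.mul_le_mul_left _ hm
    have h7 : 3 * (9 * q * m * (f A).natDegree) ≤ q ^ m := by linarith
    have h8 : 3 * (I * m) ≤ q ^ m := by linarith
    show ((p (i, j) : F[X]) * A ^ (i : ℕ) * f A ^ (j : ℕ)).natDegree ≤ q ^ m - 1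
    omega
  have hGcong : ∀ p A B P, Irreducible P → P ∣ G p (A + B * P) - G p A := by
    intro p A B P hP
    rw [← Finset.sum_sub_distrib]
    apply Finset.dvd_sum
    rintro ij -
    have h1 : A + B * P ≡ A [SMOD Ideal.span {P}] := by
      rw [SModEq.sub_mem, Ideal.mem_span_singleton]
      simp
    have h2 : f (A + B * P) ≡ f A [SMOD Ideal.span {P}] := by
      rw [SModEq.sub_mem, Ideal.mem_span_singleton]
      exact hcong A B P hP
    have h3 := (((SModEq.refl (U := Ideal.span {P}) (p ij : F[X])).mul
      (h1.pow (ij.1 : ℕ))).mul (h2.pow (ij.2 : ℕ)))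
    rwa [SModEq.sub_mem, Ideal.mem_span_singleton] at h3
  -- existence of the auxiliary polynomial
  obtain ⟨p, hp0, hpM⟩ : ∃ p : Fin I × Fin J → degreeLT F D, p ≠ 0 ∧
      ∀ A : F[X], A ∈ degreeLT F M → G p A = 0 := by
    let T : (Fin I × Fin J → degreeLT F D) →ₗ[F] (degreeLT F M → Fin (q ^ M) → F) :=
      { toFun := fun p A k => (G p A).coeff k
        map_add' := by
          intro a b
          funext A k
          simp [G, add_mul, Finset.sum_add_distrib]
        map_smul' := by
          intro c a
          funext A k
          simp [G, Finset.mul_sum] }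
    have : Fintype (degreeLT F M) := Fintype.ofEquiv _ (degreeLTEquiv F M).toEquiv.symm
    have : FiniteDimensional F (degreeLT F D) :=
      LinearEquiv.finiteDimensional (degreeLTEquiv F D).symm
    have hk : LinearMap.ker T ≠ ⊥ := by
      apply LinearMap.ker_ne_bot_of_finrank_lt
      simp only [Module.finrank_pi_fintype, Module.finrank_self, mul_one, (degreeLTEquiv F D).finrank_eq, Finset.sum_const,
        Finset.card_univ, Fintype.card_prod, Fintype.card_fin, smul_eq_mul,
        Fintype.card_congr (degreeLTEquiv F M).toEquiv, Fintype.card_fun]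
      exact hDIJ
    obtain ⟨p, hp, hp0⟩ := Submodule.exists_mem_ne_zero_of_ne_bot hk
    refine ⟨p, hp0, fun A hA => ?_⟩
    ext k
    rw [coeff_zero]
    have hAM : A.natDegree ≤ M := natDegree_le_of_degree_le (mem_degreeLT.1 hA).le
    by_cases hk : k < q ^ M
    · exact congrFun (congrFun (LinearMap.mem_ker.1 hp) ⟨A, hA⟩) ⟨k, hk⟩
    · exact coeff_eq_zero_of_natDegree_lt (lt_of_lt_of_le (hGdeg p M A le_rfl hAM) (by omega))
  have hvan : ∀ m, M ≤ m → ∀ A : F[X], A.degree < m → G p A = 0 := by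
    intro m hm
    induction m, hm using Nat.le_induction with
    | base => exact fun A hA => hpM A (mem_degreeLT.2 hA)
    | succ m hm ih =>
      intro A hA
      have hAm : A.natDegree ≤ m := natDegree_le_of_degree_le (Order.lt_succ_iff.1 hA)
      refine eq_zero_of_forall_dvd (m := m) (by omega) (hGdeg p m A hm hAm) fun P hP hPm => ?_
      have h1 := hGcong p (A % P) (A / P) P hP
      rw [mul_comm, EuclideanDomain.mod_add_div, ih (A % P), sub_zero] at h1
      · exact h1
      · refine (degree_mod_lt A hP.ne_zero).trans_le ?_
        exact degree_le_of_natDegree_le hPm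
  let e : Fin I × Fin J → (Fin 2 →₀ ℕ) := fun ij =>
    Finsupp.single 0 (ij.1 : ℕ) + Finsupp.single 1 (ij.2 : ℕ)
  have he : Function.Injective e := by
    intro a b hab
    have h0 := DFunLike.congr_fun hab 0
    have h1 := DFunLike.congr_fun hab 1
    simp [e] at h0 h1
    exact Prod.ext (Fin.ext h0) (Fin.ext h1)
  refine ⟨∑ ij, MvPolynomial.monomial (e ij) (p ij : F[X]), ?_, fun A => ?_⟩
  · intro hQ
    apply hp0
    funext ij
    have := congrArg (MvPolynomial.coeff (e ij)) hQ
    simpa [MvPolynomial.coeff_sum, MvPolynomial.coeff_monomial, he.eq_iff] using this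
  · have h1 := hvan (M + A.natDegree + 1) (by omega) A
      (lt_of_le_of_lt degree_le_natDegree (by norm_cast; omega))
    rw [← h1, map_sum]
    refine Finset.sum_congr rfl fun ij _ => ?_
    rw [MvPolynomial.eval_monomial, Finsupp.prod_fintype _ _ (by simp)]
    simp [e, mul_assoc]
end

section
/- Let f : 𝒜 → 𝒜 satisfy f(A + B·P) ≡ f(A) (mod P) for every A, B ∈ 𝒜 and every irreducible P ∈ 𝒫, and suppose that deg(f(A)) < q^{deg(A)} / (27·q·deg(A)) whenever deg(A) is sufficiently large. Then there exist constants C₃, C₄ > 0 (depending only on q and f) such that deg(f(A)) ≤ C₃·deg(A) + C₄ for every A ∈ 𝒜 \ {0}. -/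
open Polynomial

lemma rz_sqfree_dvd {F : Type*} [Field F] (E : F[X]) (s : F[X]) (hs : Squarefree s)
    (h : ∀ P : F[X], Irreducible P → P ∣ s → P ∣ E) : s ∣ E := by
  induction s using UniqueFactorizationMonoid.induction_on_prime with
  | h₁ => exact absurd hs not_squarefree_zero
  | h₂ x hx => exact hx.dvd
  | h₃ a p ha hp ih =>
    have h1 := squarefree_mul_iff.1 hs
    exact h1.1.mul_dvd (h p hp.irreducible (dvd_mul_right _ _))
      (ih h1.2.2 fun P hP hd => h P hP (hd.mul_left _))

lemma rz_eq_zero {F : Type*} [Field F] [Fintype F] (E : F[X]) (m : ℕ) (hm : m ≠ 0)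
    (h : ∀ P : F[X], Irreducible P → P.natDegree ≤ m → P ∣ E)
    (hd : E.natDegree < Fintype.card F ^ m) : E = 0 := by
  have hdvd : (X ^ (Fintype.card F) ^ m - X : F[X]) ∣ E := by
    apply rz_sqfree_dvd
    · obtain ⟨p, hp⟩ := CharP.exists F
      apply Separable.squarefree
      apply galois_poly_separable p
      have h1 : p ∣ Fintype.card F := by
        rw [← CharP.cast_eq_zero_iff F p]
        exact FiniteField.cast_card_eq_zero F
      exact h1.trans (dvd_pow_self _ hm)
    · intro P hP hd
      refine h P hP (Nat.le_of_dvd (Nat.pos_of_ne_zero hm) ?_)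
      apply hP.natDegree_dvd_of_dvd_X_pow_card_pow_sub_X
      rwa [Nat.card_eq_fintype_card]
  apply Polynomial.eq_zero_of_dvd_of_natDegree_lt hdvd
  rwa [FiniteField.X_pow_card_pow_sub_X_natDegree_eq _ hm Fintype.one_lt_card]

/-- The auxiliary function. -/
noncomputable def rzE {F : Type*} [Field F] {r D : ℕ} (w : Fin (r+1) → Fin (D+1) → F[X])
    (f : F[X] → F[X]) (A : F[X]) : F[X] :=
  ∑ i, ∑ j, w i j * A ^ (j : ℕ) * f A ^ (i : ℕ)

lemma rzE_natDegree {F : Type*} [Field F] {r D : ℕ} (w : Fin (r+1) → Fin (D+1) → F[X])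
    (f : F[X] → F[X]) (A : F[X]) (H a g : ℕ) (hw : ∀ i j, (w i j).natDegree ≤ H)
    (ha : A.natDegree ≤ a) (hg : (f A).natDegree ≤ g) :
    (rzE w f A).natDegree ≤ H + D * a + r * g := by
  unfold rzE
  refine natDegree_sum_le_of_forall_le _ _ fun i _ => ?_
  refine natDegree_sum_le_of_forall_le _ _ fun j _ => ?_
  refine natDegree_mul_le.trans (add_le_add (natDegree_mul_le.trans (add_le_add (hw i j) ?_)) ?_)
  · exact natDegree_pow_le.trans (Nat.mul_le_mul (by omega) ha)
  · exact natDegree_pow_le.trans (Nat.mul_le_mul (by omega) hg)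

lemma rzE_dvd {F : Type*} [Field F] {r D : ℕ} (w : Fin (r+1) → Fin (D+1) → F[X])
    (f : F[X] → F[X])
    (hcong : ∀ A B P : F[X], Irreducible P → P ∣ f (A + B * P) - f A) (A P : F[X])
    (hP : Irreducible P) (h0 : rzE w f (A % P) = 0) : P ∣ rzE w f A := by
  have h1 := hcong (A % P) (A / P) P hP
  have h2 : A % P + A / P * P = A := by rw [mul_comm]; exact EuclideanDomain.mod_add_div A P
  rw [h2] at h1
  have h3 : P ∣ A - A % P := ⟨A / P, by linear_combination (-1 : F[X]) * h2⟩
  rw [← Ideal.mem_span_singleton, ← Ideal.Quotient.eq] at h1 h3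
  rw [← Ideal.mem_span_singleton, ← Ideal.Quotient.eq_zero_iff_mem]
  rw [← map_zero (Ideal.Quotient.mk (Ideal.span {P})), ← h0]
  simp only [rzE, map_sum, map_mul, map_pow, h1, h3]

lemma rz_siegel_s4 {F : Type*} [Field F] [Fintype F] (f : F[X] → F[X]) (r D H G n : ℕ)
    (hN : Fintype.card F ^ n * (H + D * n + r * G + 1) < (r + 1) * ((D + 1) * (H + 1)))
    (hG : ∀ A : F[X], A.natDegree < n → (f A).natDegree ≤ G) (hn : n ≠ 0) :
    ∃ w : Fin (r+1) → Fin (D+1) → F[X], w ≠ 0 ∧ (∀ i j, (w i j).natDegree ≤ H) ∧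
      ∀ A : F[X], A.natDegree < n → rzE w f A = 0 := by
  classical
  let S := Fin n → F
  let e := degreeLTEquiv F n
  let L := H + D * n + r * G + 1
  let T : (Fin (r+1) → Fin (D+1) → degreeLT F (H+1)) →ₗ[F] (S → Fin L → F) :=
    { toFun := fun w s k => (rzE (fun i j => (w i j : F[X])) f (e.symm s : F[X])).coeff k
      map_add' := by
        intro x y
        ext s k
        simp [rzE, add_mul, Finset.sum_add_distrib]
      map_smul' := by
        intro c x
        ext s k
        simp [rzE, Finset.mul_sum] }
  have hfd : ∀ k : ℕ, Module.finrank F (degreeLT F k) = k := fun k => by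
    rw [(degreeLTEquiv F k).finrank_eq]; simp
  have : ∀ k : ℕ, FiniteDimensional F (degreeLT F k) := fun k =>
    Module.Finite.equiv (degreeLTEquiv F k).symm
  have hker : LinearMap.ker T ≠ ⊥ := by
    apply LinearMap.ker_ne_bot_of_finrank_lt
    simp only [Module.finrank_pi_fintype, hfd, Module.finrank_self]
    simpa [S, L] using hN
  obtain ⟨w, hw, hw0⟩ := Submodule.exists_mem_ne_zero_of_ne_bot hker
  have hdeg : ∀ i j, (w i j : F[X]).natDegree ≤ H := by
    intro i j
    have := mem_degreeLT.1 (w i j).2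
    rw [degree_lt_iff_coeff_zero] at this
    exact natDegree_le_iff_coeff_eq_zero.2 fun k hk => this k hk
  refine ⟨fun i j => (w i j : F[X]), ?_, hdeg, ?_⟩
  · intro h
    apply hw0
    ext i j : 3
    have := congrFun (congrFun h i) j
    simpa using this
  · intro A hA
    have hA' : A ∈ degreeLT F n := mem_degreeLT.2
      (degree_le_natDegree.trans_lt (by exact_mod_cast hA))
    have hlt := rzE_natDegree (fun i j => (w i j : F[X])) f A H n G hdeg hA.le (hG A hA)
    ext k
    by_cases hk : k < L
    · have h1 := congrFun (congrFun (LinearMap.mem_ker.1 hw) (e ⟨A, hA'⟩)) ⟨k, hk⟩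
      simpa [T] using h1
    · rw [coeff_eq_zero_of_natDegree_lt (by omega), coeff_zero]

lemma rz_root_bound {F : Type*} [Field F] {r : ℕ} (a : Fin (r+1) → F[X]) (y : F[X])
    (t : Fin (r+1)) (B : ℕ) (h : ∑ i, a i * y ^ (i : ℕ) = 0) (ht : a t ≠ 0)
    (hi : ∀ i, t < i → a i = 0) (hB : ∀ i, (a i).natDegree ≤ B) : y.natDegree ≤ B := by
  classical
  by_contra hlt
  push Not at hlt
  have hy : y ≠ 0 := by rintro rfl; simp at hlt
  rw [← Finset.add_sum_erase _ _ (Finset.mem_univ t)] at h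
  have h1 := eq_neg_of_add_eq_zero_left h
  have h2 : (∑ i ∈ Finset.univ.erase t, a i * y ^ (i : ℕ)).natDegree ≤
      B + ((t : ℕ) - 1) * y.natDegree := by
    refine natDegree_sum_le_of_forall_le _ _ fun i him => ?_
    rcases lt_or_ge t i with hti | hti
    · simp [hi i hti]
    · have hne := Finset.ne_of_mem_erase him
      have : (i : ℕ) < t := lt_of_le_of_ne hti (fun h => hne (Fin.ext h))
      exact natDegree_mul_le.trans (add_le_add (hB i)
        (natDegree_pow_le.trans (Nat.mul_le_mul_right _ (by omega))))
  have h3 : (a t * y ^ (t : ℕ)).natDegree = (a t).natDegree + t * y.natDegree := by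
    rw [natDegree_mul ht (pow_ne_zero _ hy), natDegree_pow]
  rw [h1, natDegree_neg] at h3
  rcases Nat.eq_zero_or_pos (t : ℕ) with h0 | h0
  · rw [Finset.sum_eq_zero, neg_zero] at h1
    · exact mul_ne_zero ht (pow_ne_zero _ hy) h1
    · intro i him
      have hne := Finset.ne_of_mem_erase him
      rw [hi i, zero_mul]
      rw [Fin.lt_def]
      have : (i : ℕ) ≠ t := fun h => hne (Fin.ext h)
      omega
  · obtain ⟨s, hs⟩ : ∃ s, (t : ℕ) = s + 1 := ⟨t - 1, by omega⟩
    rw [hs, Nat.add_sub_cancel] at h2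
    rw [hs, add_mul] at h3
    omega

lemma rz_mono (q d n : ℕ) (hq : 2 ≤ q) (hd : 1 ≤ d) (hdn : d ≤ n) :
    n * q ^ d ≤ d * q ^ n := by
  induction n, hdn using Nat.le_induction with
  | base => exact le_rfl
  | succ n hn ih =>
    calc (n + 1) * q ^ d ≤ (n * q ^ d) * 2 := by
          have : n + 1 ≤ n * 2 := by omega
          nlinarith [Nat.mul_le_mul_right (q ^ d) this]
      _ ≤ (d * q ^ n) * q := Nat.mul_le_mul ih hq
      _ = d * q ^ (n + 1) := by ring

lemma rz_sq (n : ℕ) (hn : 4 ≤ n) : n * n ≤ 2 ^ n := by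
  induction n, hn using Nat.le_induction with
  | base => norm_num
  | succ n hn ih => rw [pow_succ]; nlinarith

theorem ruzsa_polynomial_linear_bound {F : Type*} [Field F] [Fintype F]
    (q : ℕ) (hq : q = Fintype.card F)
    (f : F[X] → F[X])
    (hcong : ∀ A B P : F[X], Irreducible P → P ∣ f (A + B * P) - f A)
    (hdeg : ∃ N : ℕ, ∀ A : F[X], N ≤ A.natDegree →
      ((f A).natDegree : ℝ) < (q : ℝ) ^ A.natDegree / (27 * (q : ℝ) * (A.natDegree : ℝ))) :
    ∃ C₃ C₄ : ℝ, 0 < C₃ ∧ 0 < C₄ ∧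
      ∀ A : F[X], A ≠ 0 → ((f A).natDegree : ℝ) ≤ C₃ * (A.natDegree : ℝ) + C₄ := by
  classical
  have hq2 : 2 ≤ q := hq ▸ Fintype.one_lt_card
  obtain ⟨N, hN⟩ := hdeg
  -- natural number version of the growth hypothesis
  have hN' : ∀ A : F[X], N ≤ A.natDegree → 1 ≤ A.natDegree ∧
      54 * A.natDegree * (f A).natDegree ≤ q ^ A.natDegree := by
    intro A hA
    have h := hN A hA
    have h1 : 1 ≤ A.natDegree := by
      by_contra h0
      have h0' : A.natDegree = 0 := by omega
      rw [h0'] at h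
      simp at h
      exact absurd h (not_lt.2 (Nat.cast_nonneg _))
    refine ⟨h1, ?_⟩
    have hdpos : (0 : ℝ) < A.natDegree := by exact_mod_cast h1
    have hqr : (2 : ℝ) ≤ q := by exact_mod_cast hq2
    rw [lt_div_iff₀ (by positivity)] at h
    have h2 : (54 * A.natDegree * (f A).natDegree : ℝ) ≤ (q : ℝ) ^ A.natDegree := by
      have h3 : (0 : ℝ) ≤ (A.natDegree : ℝ) * (f A).natDegree := by positivity
      nlinarith
    exact_mod_cast h2
  -- bound for small degrees
  obtain ⟨K, hK⟩ : ∃ K : ℕ, ∀ A : F[X], A.natDegree < N → (f A).natDegree ≤ K := by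
    have : Finite (degreeLT F N) := Finite.of_equiv _ (degreeLTEquiv F N).toEquiv.symm
    obtain ⟨K, hK⟩ := (Set.finite_range
      (fun A : degreeLT F N => (f (A : F[X])).natDegree)).bddAbove
    refine ⟨K, fun A hA => hK ⟨⟨A, mem_degreeLT.2
      (degree_le_natDegree.trans_lt (by exact_mod_cast hA))⟩, rfl⟩⟩
  -- choice of parameters
  obtain ⟨n, hn4, hnK, hnN⟩ : ∃ n : ℕ, 4 ≤ n ∧ 54 * K ≤ n ∧ N ≤ n :=
    ⟨4 + 54 * K + N, by omega, by omega, by omega⟩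
  set G := q ^ n / (54 * n) with hGdef
  have hGn : 54 * n * G ≤ q ^ n := Nat.mul_div_le _ _
  have hG : ∀ A : F[X], A.natDegree < n → (f A).natDegree ≤ G := by
    intro A hA
    rw [hGdef, Nat.le_div_iff_mul_le (by omega)]
    rcases lt_or_ge A.natDegree N with h | h
    · have h1 := hK A h
      calc (f A).natDegree * (54 * n) ≤ K * (54 * n) := Nat.mul_le_mul_right _ h1
        _ = (54 * K) * n := by ring
        _ ≤ n * n := Nat.mul_le_mul_right _ hnK
        _ ≤ 2 ^ n := rz_sq n hn4
        _ ≤ q ^ n := Nat.pow_le_pow_left hq2 n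
    · obtain ⟨h1, h2⟩ := hN' A h
      have h3 := rz_mono q A.natDegree n hq2 h1 hA.le
      refine Nat.le_of_mul_le_mul_left ?_ h1
      calc A.natDegree * ((f A).natDegree * (54 * n))
          = n * (54 * A.natDegree * (f A).natDegree) := by ring
        _ ≤ n * q ^ A.natDegree := Nat.mul_le_mul_left _ h2
        _ ≤ _ := h3
  set D := 2 * q ^ n / (9 * n) with hDdef
  have hDn : 9 * n * D ≤ 2 * q ^ n := Nat.mul_div_le _ _
  have hD1 : 2 * q ^ n < (9 * n) * (D + 1) := Nat.lt_mul_div_succ _ (by omega)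
  set r := 9 * n with hr
  set H := D * n + r * G with hH
  obtain ⟨w, hw0, hwH, hwz⟩ := rz_siegel_s4 f r D H G n (by
    rw [← hq]
    calc q ^ n * (H + D * n + r * G + 1) ≤ (2 * q ^ n) * (H + 1) := by
          have h0 : H + D * n + r * G + 1 ≤ 2 * (H + 1) := by omega
          calc q ^ n * (H + D * n + r * G + 1) ≤ q ^ n * (2 * (H + 1)) :=
                Nat.mul_le_mul_left _ h0
            _ = (2 * q ^ n) * (H + 1) := by ring
      _ < (r * (D + 1)) * (H + 1) := Nat.mul_lt_mul_of_pos_right hD1 (by omega)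
      _ ≤ (r + 1) * ((D + 1) * (H + 1)) := by
          rw [mul_assoc]; exact Nat.mul_le_mul_right _ (by omega)) hG (by omega)
  -- vanishing everywhere
  have hall : ∀ m : ℕ, ∀ A : F[X], A.natDegree = m → rzE w f A = 0 := by
    intro m
    induction m using Nat.strong_induction_on with
    | _ m ih =>
      intro A hA
      rcases lt_or_ge m n with hmn | hmn
      · exact hwz A (by omega)
      · apply rz_eq_zero _ m (by omega)
        · intro P hP hPm
          apply rzE_dvd w f hcong A P hP
          have h1 := natDegree_mod_lt A hP.natDegree_pos.ne'
          exact ih _ (by omega) _ rfl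
        · have h1 := rzE_natDegree w f A H m _ hwH hA.le le_rfl
          refine h1.trans_lt ?_
          rw [← hq]
          obtain ⟨h2, h3⟩ := hN' A (by omega)
          rw [hA] at h3
          have h4 := rz_mono q n m hq2 (by omega) hmn
          have h5 : q ^ n ≤ q ^ m := Nat.pow_le_pow_right (by omega) hmn
          have h6 : 9 * (D * m) ≤ 2 * q ^ m := by
            refine Nat.le_of_mul_le_mul_left ?_ (show 0 < n by omega)
            calc n * (9 * (D * m)) = m * (9 * n * D) := by ring
              _ ≤ m * (2 * q ^ n) := Nat.mul_le_mul_left _ hDn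
              _ = 2 * (m * q ^ n) := by ring
              _ ≤ 2 * (n * q ^ m) := Nat.mul_le_mul_left _ h4
              _ = n * (2 * q ^ m) := by ring
          have h7 : 6 * (r * (f A).natDegree) ≤ q ^ m := by
            refine le_trans ?_ h3
            calc 6 * (r * (f A).natDegree) = 54 * n * (f A).natDegree := by rw [hr]; ring
              _ ≤ _ := Nat.mul_le_mul_right _ (by omega)
          have h8 : 9 * (D * n) ≤ 2 * q ^ n := by
            calc 9 * (D * n) = 9 * n * D := by ring
              _ ≤ _ := hDn
          have h9 : 6 * (r * G) ≤ q ^ n := by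
            calc 6 * (r * G) = 54 * n * G := by rw [hr]; ring
              _ ≤ _ := hGn
          have h10 : 0 < q ^ m := Nat.pow_pos (by omega)
          omega
  -- the coefficient polynomials
  let u : Fin (r+1) → F[X][X] := fun i => ∑ j, C (w i j) * X ^ (j : ℕ)
  have hueval : ∀ i A, (u i).eval A = ∑ j, w i j * A ^ (j : ℕ) := by
    intro i A
    simp [u, eval_finsetSum]
  have hu0 : ∃ i, u i ≠ 0 := by
    by_contra hcon
    push Not at hcon
    apply hw0
    ext1 i
    ext1 j
    have h1 := congrArg (fun p => p.coeff (j : ℕ)) (hcon i)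
    simpa [u, finsetSum_coeff, coeff_X_pow, Fin.val_inj] using h1
  obtain ⟨t, ht, htmax⟩ : ∃ t, u t ≠ 0 ∧ ∀ i, t < i → u i = 0 := by
    have hne : (Finset.univ.filter (fun i => u i ≠ 0)).Nonempty := by
      obtain ⟨i, hi⟩ := hu0
      exact ⟨i, by simpa using hi⟩
    refine ⟨_, (Finset.mem_filter.1 (Finset.max'_mem _ hne)).2, fun i hi => ?_⟩
    by_contra h
    exact absurd (Finset.le_max' _ i (by simpa using h)) (not_le.2 hi)
  refine ⟨D + 1, H + ∑ A ∈ (u t).roots.toFinset, ((f A).natDegree : ℝ) + 1,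
    by positivity, by positivity, fun A _ => ?_⟩
  have hsum : (0 : ℝ) ≤ ∑ A ∈ (u t).roots.toFinset, ((f A).natDegree : ℝ) := by positivity
  by_cases hroot : (u t).eval A = 0
  · have hmem : A ∈ (u t).roots.toFinset := by
      rw [Multiset.mem_toFinset, mem_roots ht]; exact hroot
    have h1 := Finset.single_le_sum (f := fun A => ((f A).natDegree : ℝ))
      (fun _ _ => by positivity) hmem
    have h2 : (0 : ℝ) ≤ (D + 1) * (A.natDegree : ℝ) := by positivity
    have h3 : (0 : ℝ) ≤ H := by positivity
    linarith
  · have h1 := rz_root_bound (fun i => (u i).eval A) (f A) t (H + D * A.natDegree) (by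
        have := hall _ A rfl
        rw [rzE] at this
        simpa only [hueval, Finset.sum_mul] using this) hroot
        (fun i hi => by simp [htmax i hi]) (fun i => by
          simp only [hueval]
          refine natDegree_sum_le_of_forall_le _ _ fun j _ => ?_
          exact natDegree_mul_le.trans (add_le_add (hwH i j)
            (natDegree_pow_le.trans (Nat.mul_le_mul_right _ (by omega)))))
    have h2 : ((f A).natDegree : ℝ) ≤ H + D * A.natDegree := by exact_mod_cast h1
    have h3 : (0 : ℝ) ≤ A.natDegree := by positivity
    nlinarith
end

section
/- Let f : 𝒜 → 𝒜 be a map and suppose there is a nonzero polynomial Q(X, Y) ∈ 𝒜[X, Y] with Q(A, f(A)) = 0 for every A ∈ 𝒜. Then there exist constants C₃, C₄ > 0 such that deg(f(A)) ≤ C₃·deg(A) + C₄ for every A ∈ 𝒜 \ {0}. -/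
open Polynomial

theorem natDegree_root_le {F : Type*} [Field F] (y : F[X]) (N : ℕ) (n : ℕ) :
    ∀ p : F[X][X], p.natDegree ≤ n → p ≠ 0 → p.eval y = 0 →
      (∀ i, (p.coeff i).natDegree ≤ N) → y.natDegree ≤ N := by
  induction n with
  | zero =>
    intro p hn hp hy hc
    rw [Polynomial.eq_C_of_natDegree_le_zero hn] at hy hp
    simp at hy hp
    exact absurd hy hp
  | succ n ih =>
    intro p hn hp hy hc
    have hdecomp := Polynomial.divX_mul_X_add p
    have hev : p.divX.eval y * y + p.coeff 0 = 0 := by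
      rw [← hy]
      conv_rhs => rw [← hdecomp]
      simp
    by_cases h0 : p.coeff 0 = 0
    · rw [h0, add_zero] at hev
      rcases mul_eq_zero.mp hev with h | h
      · refine ih p.divX ?_ ?_ h ?_
        · rw [Polynomial.natDegree_divX_eq_natDegree_tsub_one]; omega
        · intro hd
          apply hp
          rw [← hdecomp, hd, h0]; simp
        · intro i
          rw [Polynomial.coeff_divX]; exact hc _
      · simp [h]
    · have hd : y ∣ p.coeff 0 := by
        refine ⟨-p.divX.eval y, ?_⟩
        linear_combination hev
      exact (Polynomial.natDegree_le_of_dvd hd h0).trans (hc 0)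

theorem natDegree_eval_le_linear {F : Type*} [Field F] (c : F[X][X]) :
    ∃ a b : ℕ, ∀ A : F[X], (c.eval A).natDegree ≤ a * A.natDegree + b := by
  induction c using Polynomial.induction_on' with
  | add p q hp hq =>
    obtain ⟨a, b, h⟩ := hp
    obtain ⟨a', b', h'⟩ := hq
    refine ⟨a + a', b + b', fun A => ?_⟩
    rw [Polynomial.eval_add]
    refine (Polynomial.natDegree_add_le _ _).trans (max_le ?_ ?_)
    · nlinarith [h A, Nat.zero_le (a' * A.natDegree)]
    · nlinarith [h' A, Nat.zero_le (a * A.natDegree)]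
  | monomial n r =>
    refine ⟨n, r.natDegree, fun A => ?_⟩
    rw [Polynomial.eval_monomial]
    have h1 := Polynomial.natDegree_mul_le (p := r) (q := A ^ n)
    have h2 := Polynomial.natDegree_pow_le (p := A) (n := n)
    omega

theorem natDegree_coeff_le_linear {F : Type*} [Field F] (P : F[X][X][X]) :
    ∃ a b : ℕ, ∀ (A : F[X]) (i : ℕ),
      ((P.coeff i).eval A).natDegree ≤ a * A.natDegree + b := by
  choose a b h using fun c : F[X][X] => natDegree_eval_le_linear c
  refine ⟨∑ i ∈ P.support, a (P.coeff i), ∑ i ∈ P.support, b (P.coeff i), fun A i => ?_⟩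
  by_cases hi : i ∈ P.support
  · refine (h _ A).trans ?_
    have h1 := Finset.single_le_sum (f := fun i => a (P.coeff i)) (fun _ _ => Nat.zero_le _) hi
    have h2 := Finset.single_le_sum (f := fun i => b (P.coeff i)) (fun _ _ => Nat.zero_le _) hi
    exact Nat.add_le_add (Nat.mul_le_mul_right _ h1) h2
  · rw [Polynomial.notMem_support_iff.mp hi]; simp

/-- If `f : 𝒜 → 𝒜` is a map and there is a nonzero `Q ∈ 𝒜[X, Y]` with `Q(A, f(A)) = 0`
for every `A ∈ 𝒜`, then there are constants `C₃, C₄ > 0` with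
`deg(f(A)) ≤ C₃ deg(A) + C₄` for every nonzero `A ∈ 𝒜`. -/
theorem linear_bound_of_algebraic_relation {F : Type*} [Field F] [Fintype F]
    (f : F[X] → F[X])
    (Q : MvPolynomial (Fin 2) F[X]) (hQ : Q ≠ 0)
    (hrel : ∀ A : F[X], MvPolynomial.eval ![A, f A] Q = 0) :
    ∃ C₃ C₄ : ℝ, 0 < C₃ ∧ 0 < C₄ ∧
      ∀ A : F[X], A ≠ 0 → ((f A).natDegree : ℝ) ≤ C₃ * (A.natDegree : ℝ) + C₄ := by
  classical
  set P := (Polynomial.Bivariate.equivMvPolynomial F[X]).symm Q with hP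
  have hP0 : P ≠ 0 := by
    rw [hP]; simpa using hQ
  have hPQ : ∀ A y : F[X], (P.map (Polynomial.evalRingHom A)).eval y
      = MvPolynomial.eval ![A, y] Q := by
    intro A y
    have key : ∀ R : MvPolynomial (Fin 2) F[X],
        (((Polynomial.Bivariate.equivMvPolynomial F[X]).symm R).map
          (Polynomial.evalRingHom A)).eval y = MvPolynomial.eval ![A, y] R := by
      intro R
      induction R using MvPolynomial.induction_on with
      | C r => simp
      | add p q hp hq => simp [hp, hq]
      | mul_X p i hp =>
        rw [map_mul, Polynomial.map_mul, Polynomial.eval_mul, hp, map_mul]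
        fin_cases i <;> simp
    exact key Q
  obtain ⟨a, b, hab⟩ := natDegree_coeff_le_linear P
  have hlc : P.leadingCoeff ≠ 0 := Polynomial.leadingCoeff_ne_zero.mpr hP0
  refine ⟨a + 1, b + 1 + ∑ A ∈ P.leadingCoeff.roots.toFinset, ((f A).natDegree : ℝ),
    by positivity, by positivity, fun A _ => ?_⟩
  by_cases hA : P.leadingCoeff.eval A = 0
  · have hmem : A ∈ P.leadingCoeff.roots.toFinset := by
      simp [Polynomial.mem_roots hlc, Polynomial.IsRoot, hA]
    have h1 := Finset.single_le_sum (f := fun A => ((f A).natDegree : ℝ))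
      (fun _ _ => Nat.cast_nonneg _) hmem
    have : (0 : ℝ) ≤ (a + 1) * (A.natDegree : ℝ) := by positivity
    have : (0 : ℝ) ≤ b := by positivity
    linarith
  · have h1 : (f A).natDegree ≤ a * A.natDegree + b := by
      refine natDegree_root_le (f A) _ _ (P.map (Polynomial.evalRingHom A)) le_rfl ?_ ?_ ?_
      · intro h
        apply hA
        have := congrArg (fun p => Polynomial.coeff p P.natDegree) h
        simpa using this
      · rw [hPQ, hrel]
      · intro i
        rw [Polynomial.coeff_map]
        exact hab A i
    have h2 : ((f A).natDegree : ℝ) ≤ a * A.natDegree + b := by exact_mod_cast h1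
    have h3 : (0 : ℝ) ≤ ∑ A ∈ P.leadingCoeff.roots.toFinset, ((f A).natDegree : ℝ) := by
      positivity
    have h4 : (0 : ℝ) ≤ A.natDegree := by positivity
    linarith
end

section
/- Let f : 𝒜 → 𝒜 satisfy f(A + B·P) ≡ f(A) (mod P) for every A, B ∈ 𝒜 and every irreducible P ∈ 𝒫. Assume there exist U ∈ 𝒜 with U′ ≠ 0 (i.e. U is not the p-th power of an element of F̄[t], where F̄ is an algebraic closure of 𝔽) and positive integers C₅ and C₆ such that deg(f(Uⁿ)) ≤ C₅·n + C₆ for every n ∈ ℕ₀. Then f is a polynomial map. -/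
open Polynomial

section Helpers

open UniqueFactorizationMonoid EuclideanDomain

theorem rz_rad_s6 {F : Type*} [Field F] (U A : F[X]) (n : ℕ) (hn : (n : F[X]) = 1)
    (hZ : U * derivative A - derivative U * A ≠ 0) :
    ∃ b : F[X], b ≠ 0 ∧ b ∣ A - U ^ n ∧
      (A - U ^ n).natDegree ≤ b.natDegree + (U * derivative A - derivative U * A).natDegree ∧
      ∀ W : F[X], (∀ P : F[X], Irreducible P → P ∣ A - U ^ n → P ∣ W) → b ∣ W := by
  classical
  set G := A - U ^ n with hG
  have hn0 : n ≠ 0 := by rintro rfl; simp at hn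
  obtain ⟨m, rfl⟩ := Nat.exists_eq_succ_of_ne_zero hn0
  have hkey : U * derivative G - derivative U * G = U * derivative A - derivative U * A := by
    have : derivative G = derivative A - U ^ m * derivative U := by
      rw [hG, derivative_sub, derivative_pow_succ]
      have h2 : (C ((m : F) + 1) : F[X]) = 1 := by
        rw [← hn]; simp
      rw [h2, one_mul]
    rw [this, hG, Nat.succ_eq_add_one, pow_succ]; ring
  have hG0 : G ≠ 0 := by
    intro h
    apply hZ
    rw [← hkey, h]; simp
  refine ⟨radical G, radical_ne_zero, radical_dvd_self, ?_, ?_⟩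
  · have h1 : divRadical G ∣ U * derivative A - derivative U * A := by
      rw [← hkey]
      exact dvd_sub ((divRadical_dvd_derivative G).mul_left _) ((divRadical_dvd_self G).mul_left _)
    have h2 := natDegree_le_of_dvd h1 hZ
    have h3 : G.natDegree = (radical G).natDegree + (divRadical G).natDegree := by
      rw [← natDegree_mul radical_ne_zero (divRadical_ne_zero hG0), radical_mul_divRadical]
    omega
  · intro W hW
    by_cases hW0 : W = 0
    · simp [hW0]
    rw [radical_dvd_iff_primeFactors_subset hW0]
    intro P hP
    rw [mem_primeFactors, mem_normalizedFactors_iff' hG0] at hP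
    rw [mem_primeFactors, mem_normalizedFactors_iff' hW0]
    exact ⟨hP.1, hP.2.1, hW P hP.1 hP.2.2⟩

theorem rz_prod_s6 {F : Type*} [Field F] (E : F[X]) (b : ℕ → F[X]) (c : ℕ → ℕ → F[X])
    (N : ℕ) (hb : ∀ i < N, b i ∣ E)
    (hc : ∀ i < N, ∀ j < i, ∀ d, d ∣ b i → d ∣ b j → d ∣ c i j) :
    ∏ i ∈ Finset.range N, b i ∣ E * ∏ i ∈ Finset.range N, ∏ j ∈ Finset.range i, c i j := by
  classical
  induction N with
  | zero => simp
  | succ N ih =>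
    have ih := ih (fun i hi => hb i (by omega)) (fun i hi => hc i (by omega))
    rw [Finset.prod_range_succ, Finset.prod_range_succ, ← mul_assoc]
    rw [← EuclideanDomain.gcd_mul_lcm, mul_comm]
    apply mul_dvd_mul
    · exact EuclideanDomain.lcm_dvd ih ((hb N (by omega)).mul_right _)
    · have : ∀ M ≤ N, EuclideanDomain.gcd (∏ i ∈ Finset.range M, b i) (b N) ∣ ∏ j ∈ Finset.range M, c N j := by
        intro M
        induction M with
        | zero => intro _; simpa using EuclideanDomain.gcd_dvd_left (1 : F[X]) (b N)
        | succ M ihM =>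
          intro hM
          rw [Finset.prod_range_succ, Finset.prod_range_succ]
          obtain ⟨x, y, hx⟩ : ∃ x y, EuclideanDomain.gcd (∏ i ∈ Finset.range M, b i) (b N) =
            (∏ i ∈ Finset.range M, b i) * x + b N * y := ⟨_, _, EuclideanDomain.gcd_eq_gcd_ab _ _⟩
          obtain ⟨x', y', hx'⟩ : ∃ x y, EuclideanDomain.gcd (b M) (b N) =
            b M * x + b N * y := ⟨_, _, EuclideanDomain.gcd_eq_gcd_ab _ _⟩
          have h1 : EuclideanDomain.gcd (b M) (b N) ∣ c N M :=
            hc N (by omega) M (by omega) _ (EuclideanDomain.gcd_dvd_right _ _)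
              (EuclideanDomain.gcd_dvd_left _ _)
          refine dvd_trans ?_ (mul_dvd_mul (ihM (by omega)) h1)
          rw [hx, hx']
          obtain ⟨r, hr⟩ := EuclideanDomain.gcd_dvd_left ((∏ i ∈ Finset.range M, b i) * b M) (b N)
          obtain ⟨s, hs⟩ := EuclideanDomain.gcd_dvd_right ((∏ i ∈ Finset.range M, b i) * b M) (b N)
          generalize EuclideanDomain.gcd ((∏ i ∈ Finset.range M, b i) * b M) (b N) = g at *
          generalize (∏ i ∈ Finset.range M, b i) = p at *
          refine ⟨r * x * x' + s * (p * x * y' + y * (b M * x' + b N * y')), ?_⟩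
          calc _ = (p * b M) * (x * x') + b N * (p * x * y' + y * (b M * x' + b N * y')) := by ring
            _ = (g * r) * (x * x') + (g * s) * (p * x * y' + y * (b M * x' + b N * y')) := by
              rw [← hr, ← hs]
            _ = _ := by ring
      exact this N le_rfl

theorem rz_pseudo {A : Type*} [CommRing A] [IsDomain A] (S : A[X]) (hS : S ≠ 0) (n : ℕ) :
    ∀ R : A[X], R.degree < n →
      ∃ (D : A) (Q T : A[X]), D ≠ 0 ∧ C D * R = Q * S + T ∧ T.degree < S.degree := by
  induction n with
  | zero =>
    intro R hR
    have : R = 0 := by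
      rw [← degree_eq_bot]
      simpa [Nat.WithBot.lt_zero_iff] using hR
    exact ⟨1, 0, 0, one_ne_zero, by simp [this], by simpa [bot_lt_iff_ne_bot] using hS⟩
  | succ n ih =>
    intro R hR
    by_cases h : R.degree < S.degree
    · exact ⟨1, 0, R, one_ne_zero, by simp, h⟩
    push Not at h
    have hR0 : R ≠ 0 := by
      rintro rfl
      simp [hS] at h
    have hl : S.leadingCoeff ≠ 0 := leadingCoeff_ne_zero.mpr hS
    have hlR : R.leadingCoeff ≠ 0 := leadingCoeff_ne_zero.mpr hR0
    have hnd : S.natDegree ≤ R.natDegree := natDegree_le_natDegree h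
    have hd : (C S.leadingCoeff * R - C R.leadingCoeff * X ^ (R.natDegree - S.natDegree) * S).degree
        < (C S.leadingCoeff * R).degree := by
      apply degree_sub_lt_left
      · rw [degree_mul, degree_mul, degree_C_mul_X_pow _ hlR, degree_C hl, degree_eq_natDegree hR0,
          degree_eq_natDegree hS]
        rw [zero_add]; norm_cast; omega
      · simp [hl, hR0]
      · rw [leadingCoeff_mul, leadingCoeff_C, leadingCoeff_mul, leadingCoeff_mul_X_pow,
          leadingCoeff_C, mul_comm]
    have hd2 : (C S.leadingCoeff * R).degree = R.degree := by
      rw [degree_mul, degree_C hl, zero_add]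
    rw [hd2] at hd
    have hRn : R.degree ≤ n := by
      rw [degree_eq_natDegree hR0] at hR ⊢
      norm_cast at hR ⊢
      omega
    obtain ⟨D, Q, T, hD, he, hT⟩ := ih _ (lt_of_lt_of_le hd hRn)
    refine ⟨D * S.leadingCoeff, Q + C D * (C R.leadingCoeff * X ^ (R.natDegree - S.natDegree)), T,
      mul_ne_zero hD hl, ?_, hT⟩
    rw [C_mul]
    linear_combination he

theorem rz_upper {F : Type*} [Field F] (T : F[X][X]) (s : ℕ) (hT : T.natDegree ≤ s) :
    ∃ H : ℕ, ∀ V : F[X], (T.eval V).natDegree ≤ H + s * V.natDegree := by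
  refine ⟨∑ i ∈ Finset.range (s + 1), (T.coeff i).natDegree, fun V => ?_⟩
  rw [eval_eq_sum_range' (Nat.lt_succ_of_le hT)]
  apply natDegree_sum_le_of_forall_le
  intro i hi
  refine natDegree_mul_le.trans (add_le_add ?_ ?_)
  · exact Finset.single_le_sum (f := fun i => (T.coeff i).natDegree) (fun _ _ => Nat.zero_le _) hi
  · refine natDegree_pow_le.trans (Nat.mul_le_mul_right _ ?_)
    simpa [Nat.lt_succ_iff] using hi

/-- If `S(V)` divides `T(V)` with `deg T < deg S`, then `T(V) = 0` once `deg V` is large. -/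
theorem rz_div {F : Type*} [Field F] (S T : F[X][X]) (hT : T.degree < S.degree) :
    ∃ K : ℕ, ∀ V : F[X], K < V.natDegree → S.eval V ∣ T.eval V → T.eval V = 0 := by
  by_cases hT0 : T = 0
  · exact ⟨0, fun V _ _ => by simp [hT0]⟩
  have hnd : T.natDegree < S.natDegree := natDegree_lt_natDegree hT0 hT
  have hS0 : S ≠ 0 := by rintro rfl; simp at hT
  obtain ⟨s, hs⟩ : ∃ s, S.natDegree = s + 1 := ⟨S.natDegree - 1, by omega⟩
  obtain ⟨H, hH⟩ := rz_upper T s (by omega)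
  obtain ⟨H', hH'⟩ := rz_upper S.eraseLead s (by have := eraseLead_natDegree_le S; omega)
  refine ⟨H + H', fun V hV hdvd => ?_⟩
  by_contra hne
  have h1 := natDegree_le_of_dvd hdvd hne
  have h2 := hH V
  have h3 := hH' V
  have hl : S.leadingCoeff ≠ 0 := leadingCoeff_ne_zero.mpr hS0
  have hV0 : V ≠ 0 := by rintro rfl; simp at hV
  have h4 : (S.leadingCoeff * V ^ (s + 1)).natDegree =
      S.leadingCoeff.natDegree + (s + 1) * V.natDegree := by
    rw [natDegree_mul hl (pow_ne_zero _ hV0), natDegree_pow]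
  have h5 : S.leadingCoeff * V ^ (s + 1) = S.eval V - S.eraseLead.eval V := by
    have h := congrArg (eval V) (eraseLead_add_C_mul_X_pow S)
    rw [eval_add, eval_mul, eval_C, eval_pow, eval_X, hs] at h
    rw [← h]; ring
  have h6 := natDegree_sub_le (S.eval V) (S.eraseLead.eval V)
  rw [← h5, h4] at h6
  have : (s + 1) * V.natDegree = s * V.natDegree + V.natDegree := by ring
  rcases le_max_iff.mp h6 with h | h <;> omega

theorem rz_lin {A : Type*} [CommRing A] [IsDomain A] (c : ℕ) (x y : ℕ → A) :
    ∃ R S : A[X], (R ≠ 0 ∨ S ≠ 0) ∧ R.natDegree ≤ c ∧ S.natDegree ≤ c ∧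
      ∀ k < 2 * c + 1, R.eval (x k) + S.eval (x k) * y k = 0 := by
  let L : ((Fin (c + 1) ⊕ Fin (c + 1)) → A) →ₗ[A] (Fin (2 * c + 1) → A) :=
    { toFun := fun v k => (∑ i : Fin (c + 1), v (Sum.inl i) * x k ^ (i : ℕ)) +
        (∑ i : Fin (c + 1), v (Sum.inr i) * x k ^ (i : ℕ)) * y k
      map_add' := by
        intro v w; ext k
        simp only [Pi.add_apply, add_mul, Finset.sum_add_distrib]; ring
      map_smul' := by
        intro a v; ext k
        simp only [Pi.smul_apply, smul_eq_mul, RingHom.id_apply, mul_assoc, ← Finset.mul_sum]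
        ring }
  have hL : ¬ Function.Injective L := by
    intro h
    have := card_le_of_injective A L h
    simp at this
    omega
  rw [← LinearMap.ker_eq_bot, Submodule.eq_bot_iff] at hL
  push Not at hL
  obtain ⟨v, hv, hv0⟩ := hL
  let mk : (Fin (c + 1) → A) → A[X] := fun w => ∑ i : Fin (c + 1), C (w i) * X ^ (i : ℕ)
  have hmkc : ∀ w (i : Fin (c + 1)), (mk w).coeff i = w i := by
    intro w i
    simp [mk, coeff_C_mul, coeff_X_pow, Fin.val_inj]
  have hmkd : ∀ w, (mk w).natDegree ≤ c := by
    intro w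
    apply natDegree_sum_le_of_forall_le
    intro i _
    exact (natDegree_C_mul_X_pow_le _ _).trans (by omega)
  have hmke : ∀ w z, (mk w).eval z = ∑ i : Fin (c + 1), w i * z ^ (i : ℕ) := by
    intro w z; simp [mk, eval_finsetSum]
  refine ⟨mk (fun i => v (Sum.inl i)), mk (fun i => v (Sum.inr i)), ?_, hmkd _, hmkd _, ?_⟩
  · by_contra hcon
    push Not at hcon
    apply hv0
    ext i
    rcases i with i | i
    · have := hmkc (fun i => v (Sum.inl i)) i
      rw [hcon.1] at this; simpa using this.symm
    · have := hmkc (fun i => v (Sum.inr i)) i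
      rw [hcon.2] at this; simpa using this.symm
  · intro k hk
    rw [hmke, hmke]
    exact congrFun (LinearMap.mem_ker.mp hv) ⟨k, hk⟩

/-- A polynomial over `F[X]` vanishing on infinitely many powers of `U` is zero. -/
theorem rz_zero {F : Type*} [Field F] (U : F[X]) (hu : 0 < U.natDegree) (q K : ℕ) (hq : 0 < q)
    (T : F[X][X]) (hT : ∀ j, K ≤ j → T.eval (U ^ (q * j + 1)) = 0) : T = 0 := by
  apply eq_zero_of_infinite_isRoot
  refine Set.Infinite.mono (s := Set.range fun i : ℕ => U ^ (q * (K + i) + 1)) ?_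
    (Set.infinite_range_of_injective ?_)
  · rintro _ ⟨i, rfl⟩
    exact hT _ (by omega)
  · intro i j hij
    have := congrArg natDegree hij
    simp only [natDegree_pow] at this
    have := Nat.eq_of_mul_eq_mul_right hu this
    have := Nat.eq_of_mul_eq_mul_left hq (Nat.add_right_cancel this)
    omega

end Helpers

theorem rz_vanish_s6 {F : Type*} [Field F] (f : F[X] → F[X])
    (hf : ∀ A B P : F[X], Irreducible P → P ∣ A - B → P ∣ f A - f B)
    (U : F[X]) (hU : derivative U ≠ 0) (hu : 0 < U.natDegree)
    (c C₆ : ℕ) (hlin : ∀ n : ℕ, (f (U ^ n)).natDegree ≤ c * n + C₆)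
    (q : ℕ) (hq : 0 < q) (hqF : (q : F[X]) = 0)
    (R S : F[X][X]) (hR : R.natDegree ≤ c) (hS : S.natDegree ≤ c)
    (hRS : ∀ k < 2 * c + 1,
      R.eval (U ^ (q * k)) + S.eval (U ^ (q * k)) * f (U ^ (q * k)) = 0) :
    ∃ K : ℕ, ∀ j, K ≤ j →
      R.eval (U ^ (q * j + 1)) + S.eval (U ^ (q * j + 1)) * f (U ^ (q * j + 1)) = 0 := by
  obtain ⟨HR, hHR⟩ := rz_upper R c hR
  obtain ⟨HS, hHS⟩ := rz_upper S c hS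
  set u := U.natDegree with hu_def
  set N := 2 * c + 1 with hN
  let cc : ℕ → ℕ → F[X] := fun i j => 1 - U ^ (q * (i - j))
  have hpd : ∀ m, 0 < m → (1 - U ^ m).natDegree = m * u := by
    intro m hm
    rw [natDegree_sub_eq_right_of_natDegree_lt, natDegree_pow]
    rw [natDegree_one, natDegree_pow]
    positivity
  have hpn : ∀ m, 0 < m → 1 - U ^ m ≠ 0 := by
    intro m hm h
    have := hpd m hm
    rw [h, natDegree_zero] at this
    have : 0 < m * u := by positivity
    omega
  set CC : F[X] := ∏ i ∈ Finset.range N, ∏ j ∈ Finset.range i, cc i j with hCC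
  have hCC0 : CC ≠ 0 := by
    rw [hCC, Finset.prod_ne_zero_iff]
    intro i _
    rw [Finset.prod_ne_zero_iff]
    intro j hj
    have : 0 < i - j := by rw [Finset.mem_range] at hj; omega
    exact hpn _ (by positivity)
  set K1 := N * (q * N * u + (derivative U).natDegree) with hK1
  refine ⟨N + (HR + HS + C₆ + c * u + c + K1 + CC.natDegree + 1), fun j hj => ?_⟩
  set n := q * j + 1 with hn
  set E := R.eval (U ^ n) + S.eval (U ^ n) * f (U ^ n) with hE
  by_contra hE0
  have hex : ∀ k, ∃ b : F[X], k < N → (b ≠ 0 ∧ b ∣ 1 - U ^ (q * (j - k) + 1) ∧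
      q * j * u ≤ b.natDegree + (q * N * u + (derivative U).natDegree) ∧ b ∣ E) := by
    intro k
    by_cases hk : k < N
    swap
    · exact ⟨0, fun h => absurd h hk⟩
    obtain ⟨b, hb0, hb1, hb2, hb3⟩ := rz_rad_s6 U 1 (q * (j - k) + 1) (by simp [hqF])
      (by simpa using hU)
    refine ⟨b, fun _ => ⟨hb0, hb1, ?_, hb3 _ ?_⟩⟩
    · rw [hpd _ (by omega)] at hb2
      simp only [derivative_one, mul_zero, mul_one, zero_sub, natDegree_neg] at hb2
      have h1 : q * j * u = q * (j - k) * u + q * k * u := by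
        rw [← add_mul, ← mul_add]; congr 2; omega
      have h2 : q * k * u ≤ q * N * u := by gcongr
      have h3 : (q * (j - k) + 1) * u = q * (j - k) * u + u := by ring
      omega
    · intro P hP hPd
      have hd : P ∣ U ^ n - U ^ (q * k) := by
        have : U ^ n - U ^ (q * k) = - U ^ (q * k) * (1 - U ^ (q * (j - k) + 1)) := by
          have : n = q * k + (q * (j - k) + 1) := by
            rw [hn, ← add_assoc, ← mul_add]; congr 2; omega
          rw [this, pow_add]; ring
        rw [this]
        exact hPd.mul_left _
      have h1 := hd.trans (sub_dvd_eval_sub (U ^ n) (U ^ (q * k)) R)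
      have h2 := hd.trans (sub_dvd_eval_sub (U ^ n) (U ^ (q * k)) S)
      have h3 := hf _ _ P hP hd
      have h4 : E = (R.eval (U ^ n) - R.eval (U ^ (q * k))) +
          (S.eval (U ^ n) - S.eval (U ^ (q * k))) * f (U ^ n) +
          S.eval (U ^ (q * k)) * (f (U ^ n) - f (U ^ (q * k))) := by
        rw [hE]
        linear_combination hRS k hk
      rw [h4]
      exact dvd_add (dvd_add h1 (h2.mul_right _)) (h3.mul_left _)
  choose b hb using hex
  have hprod := rz_prod_s6 E b cc N (fun i hi => (hb i hi).2.2.2) (by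
    intro i hi l hl d hd1 hd2
    have h1 := hd1.trans (hb i hi).2.1
    have h2 := hd2.trans (hb l (by omega)).2.1
    have : cc i l = (1 - U ^ (q * (j - l) + 1)) - U ^ (q * (i - l)) * (1 - U ^ (q * (j - i) + 1)) := by
      have h3 : q * (j - l) + 1 = q * (i - l) + (q * (j - i) + 1) := by
        rw [← add_assoc, ← mul_add]; congr 2; omega
      rw [h3, pow_add]; simp only [cc]; ring
    rw [this]
    exact dvd_sub h2 (h1.mul_left _))
  have hdeg := natDegree_le_of_dvd hprod (mul_ne_zero hE0 hCC0)
  rw [natDegree_mul hE0 hCC0, natDegree_prod _ _ (fun i hi => (hb i (Finset.mem_range.mp hi)).1)]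
    at hdeg
  have hsum : N * (q * j * u) ≤ ∑ i ∈ Finset.range N, (b i).natDegree + K1 := by
    have := Finset.sum_le_sum (fun i hi => (hb i (Finset.mem_range.mp hi)).2.2.1)
    rw [Finset.sum_add_distrib, Finset.sum_const, Finset.sum_const, Finset.card_range,
      smul_eq_mul, smul_eq_mul] at this
    exact this
  have hEd : E.natDegree ≤ HR + HS + c * (n * u) + (c * n + C₆) := by
    have h1 := hHR (U ^ n)
    have h2 := hHS (U ^ n)
    rw [natDegree_pow, ← hu_def] at h1 h2
    have h3 := hlin n
    refine (natDegree_add_le _ _).trans (max_le ?_ (natDegree_mul_le.trans ?_)) <;> omega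
  have h1 : q * j * (c * u + c + 1) ≤ N * (q * j * u) := by
    rw [hN]
    have : c * u + c + 1 ≤ (2 * c + 1) * u := by nlinarith
    calc _ ≤ q * j * ((2 * c + 1) * u) := by gcongr
      _ = _ := by ring
  have h2 : j ≤ q * j := Nat.le_mul_of_pos_left _ hq
  have h3 : c * (n * u) + c * n = q * j * (c * u + c) + c * u + c := by rw [hn]; ring
  have h4 : q * j * (c * u + c + 1) = q * j * (c * u + c) + q * j := by ring
  omega

theorem ruzsa_polynomial_under_linear_bound {F : Type*} [Field F] [Fintype F]
    (f : F[X] → F[X])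
    (hcong : ∀ A B P : F[X], Irreducible P → P ∣ f (A + B * P) - f A)
    (U : F[X]) (hU : Polynomial.derivative U ≠ 0)
    (C₅ C₆ : ℕ) (hC₅ : 0 < C₅) (hC₆ : 0 < C₆)
    (hlin : ∀ n : ℕ, (f (U ^ n)).natDegree ≤ C₅ * n + C₆) :
    ∃ G : Polynomial (RatFunc F), ∀ A : F[X],
      Polynomial.eval (algebraMap F[X] (RatFunc F) A) G = algebraMap F[X] (RatFunc F) (f A) := by
  have hf : ∀ A B P : F[X], Irreducible P → P ∣ A - B → P ∣ f A - f B := by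
    rintro A B P hP ⟨Q, hQ⟩
    have := hcong B Q P hP
    rwa [show B + Q * P = A by linear_combination -hQ] at this
  have hu : 0 < U.natDegree := by
    by_contra h
    apply hU
    rw [eq_C_of_natDegree_eq_zero (p := U) (by omega)]
    simp
  set q := Fintype.card F with hqd
  have hq : 0 < q := Fintype.card_pos
  have hqF : (q : F[X]) = 0 := by
    rw [← map_natCast (C : F →+* F[X]), hqd, FiniteField.cast_card_eq_zero, map_zero]
  obtain ⟨R, S, hne, hR, hS, hRS⟩ := rz_lin C₅ (fun k => U ^ (q * k)) (fun k => f (U ^ (q * k)))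
  obtain ⟨K, hK⟩ := rz_vanish_s6 f hf U hU hu C₅ C₆ hlin q hq hqF R S hR hS hRS
  have hS0 : S ≠ 0 := by
    rintro rfl
    rcases hne with h | h
    · exact h (rz_zero U hu q K hq R (fun j hj => by simpa using hK j hj))
    · exact h rfl
  obtain ⟨D, Q, T, hD, hdiv, hT⟩ := rz_pseudo S hS0 (R.natDegree + 1) R
    (lt_of_le_of_lt degree_le_natDegree (by exact_mod_cast Nat.lt_succ_self _))
  have hdiv' : ∀ V : F[X], D * R.eval V = Q.eval V * S.eval V + T.eval V := by
    intro V
    have := congrArg (eval V) hdiv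
    simpa using this
  obtain ⟨K', hK'⟩ := rz_div S T hT
  have hjdeg : ∀ j, j < (U ^ (q * j + 1)).natDegree := by
    intro j
    rw [natDegree_pow]
    have h2 : j ≤ q * j := Nat.le_mul_of_pos_left _ hq
    nlinarith
  have hT0 : T = 0 := by
    apply rz_zero U hu q (K + K') hq
    intro j hj
    apply hK' _ (by have := hjdeg j; omega)
    refine ⟨-(D * f (U ^ (q * j + 1)) + Q.eval (U ^ (q * j + 1))), ?_⟩
    linear_combination D * hK j (by omega) - hdiv' (U ^ (q * j + 1))
  -- `S(V) ≠ 0` for `V` of large degree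
  obtain ⟨K2, hK2⟩ : ∃ K2 : ℕ, ∀ j, K2 ≤ j → S.eval (U ^ (q * j + 1)) ≠ 0 := by
    have hinj : Function.Injective fun j : ℕ => U ^ (q * j + 1) := by
      intro i j hij
      have := congrArg natDegree hij
      simp only [natDegree_pow] at this
      have := Nat.eq_of_mul_eq_mul_right hu this
      exact Nat.eq_of_mul_eq_mul_left hq (Nat.add_right_cancel this)
    have hfin : Set.Finite {j : ℕ | S.eval (U ^ (q * j + 1)) = 0} :=
      Set.Finite.preimage hinj.injOn (finite_setOf_isRoot hS0)
    obtain ⟨B, hB⟩ := hfin.bddAbove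
    exact ⟨B + 1, fun j hj h => by have := hB h; omega⟩
  set g : F[X][X] := -Q with hg
  have hval : ∀ j, K + K2 ≤ j →
      D * f (U ^ (q * j + 1)) - g.eval (U ^ (q * j + 1)) = 0 := by
    intro j hj
    apply mul_left_cancel₀ (hK2 j (by omega))
    have h1 := hdiv' (U ^ (q * j + 1))
    rw [hT0, eval_zero] at h1
    rw [hg, eval_neg]
    linear_combination D * hK j (by omega) - h1
  have hmod : ∀ A B P : F[X], Irreducible P → P ∣ A - B → D * f B - g.eval B = 0 →
      P ∣ D * f A - g.eval A := by
    intro A B P hP hd h0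
    have h1 := hf A B P hP hd
    have h2 := hd.trans (sub_dvd_eval_sub A B g)
    have : D * f A - g.eval A = D * (f A - f B) - (g.eval A - g.eval B) := by
      linear_combination h0
    rw [this]
    exact dvd_sub (h1.mul_left _) h2
  have hgood : ∀ A : F[X], U * derivative A - derivative U * A ≠ 0 →
      D * f A - g.eval A = 0 := by
    intro A hA
    by_contra hW
    set W := D * f A - g.eval A with hWd
    set j := K + K2 + A.natDegree + W.natDegree +
      (U * derivative A - derivative U * A).natDegree with hj
    obtain ⟨b, hb0, hb1, hb2, hb3⟩ := rz_rad_s6 U A (q * j + 1) (by simp [hqF]) hA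
    have hbW := natDegree_le_of_dvd
      (hb3 W (fun P hP hd => hmod A _ P hP hd (hval j (by omega)))) hW
    have h1 := hjdeg j
    rw [natDegree_sub_eq_right_of_natDegree_lt (by omega)] at hb2
    omega
  have hall : ∀ A : F[X], D * f A - g.eval A = 0 := by
    intro A
    by_cases hA : U * derivative A - derivative U * A ≠ 0
    · exact hgood A hA
    push Not at hA
    by_contra hW
    have hnu : ¬ IsUnit (X * (D * f A - g.eval A) + 1) := by
      intro h
      have h1 := natDegree_eq_zero_of_isUnit h
      rw [← C_1, natDegree_add_C, natDegree_X_mul hW] at h1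
      omega
    have hn0 : X * (D * f A - g.eval A) + 1 ≠ 0 := by
      intro h
      have h1 : (X * (D * f A - g.eval A) + 1).natDegree = 0 := by rw [h, natDegree_zero]
      rw [← C_1, natDegree_add_C, natDegree_X_mul hW] at h1
      omega
    obtain ⟨P, hP, hPd⟩ := WfDvdMonoid.exists_irreducible_factor hnu hn0
    have hPW : P ∣ D * f A - g.eval A := by
      by_cases h1 : U * derivative P - derivative U * P = 0
      · apply hmod A (A + X * P) P hP ⟨-X, by ring⟩
        apply hgood
        have h2 : U * derivative (A + X * P) - derivative U * (A + X * P) = U * P := by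
          rw [derivative_add, derivative_mul, derivative_X]
          linear_combination hA + X * h1
        rw [h2]
        refine mul_ne_zero ?_ hP.ne_zero
        rintro rfl
        simp at hu
      · apply hmod A (A + P) P hP ⟨-1, by ring⟩
        apply hgood
        have h2 : U * derivative (A + P) - derivative U * (A + P) =
            U * derivative P - derivative U * P := by
          rw [derivative_add]
          linear_combination hA
        rw [h2]
        exact h1
    have h1 : P ∣ 1 := (dvd_add_right (hPW.mul_left X)).mp hPd
    exact hP.not_isUnit (isUnit_of_dvd_one h1)
  have hD' : algebraMap F[X] (RatFunc F) D ≠ 0 := by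
    rw [Ne, map_eq_zero_iff _ (IsFractionRing.injective F[X] (RatFunc F))]
    exact hD
  refine ⟨C (algebraMap F[X] (RatFunc F) D)⁻¹ * g.map (algebraMap F[X] (RatFunc F)), fun A => ?_⟩
  rw [eval_mul, eval_C, eval_map_algebraMap, aeval_algebraMap_apply, coe_aeval_eq_eval,
    ← sub_eq_zero.mp (hall A), map_mul, inv_mul_cancel_left₀ hD']
end

section
/- Let U(t) ∈ 𝒜 with U′ ≠ 0 and write δ = deg(U). Let M, ε > 0. Then there exists a positive constant C₇ depending only on ε, M, p, and U such that for every n ≥ 1: d_{n−1, n, U} ≥ δ·M·n^{2−ε} − C₇. -/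
open Polynomial

/-- `rad A`: the product of the distinct monic irreducible factors of `A`. -/
noncomputable def polyRad {F : Type*} [Field F] (A : Polynomial F) : Polynomial F :=
  ∏ᶠ P ∈ {P : Polynomial F | P.Monic ∧ Irreducible P ∧ P ∣ A}, P

lemma aux_sum_lower (P : ℕ → Prop) [DecidablePred P] (h2 : ∀ k, P (k + 1) ∨ P (k + 2)) (h1 : P 1)
    (n : ℕ) : n ^ 2 ≤ 4 * ∑ m ∈ (Finset.Icc 1 n).filter P, m := by
  induction n using Nat.twoStepInduction with
  | zero => simp
  | one => simp [Finset.filter_singleton, h1]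
  | more n ih _ =>
    rw [Finset.sum_filter] at ih ⊢
    rw [Finset.sum_Icc_succ_top (by omega), Finset.sum_Icc_succ_top (by omega)]
    rcases h2 n with h | h
    · rw [if_pos h]
      generalize (if P (n + 1 + 1) then n + 1 + 1 else 0) = a
      generalize (∑ k ∈ Finset.Icc 1 n, if P k then k else 0) = b at *
      nlinarith
    · rw [show n + 1 + 1 = n + 2 from rfl, if_pos h]
      generalize (if P (n + 1) then n + 1 else 0) = a
      generalize (∑ k ∈ Finset.Icc 1 n, if P k then k else 0) = b at *
      nlinarith

lemma aux_totient (P : ℕ → Prop) [DecidablePred P] (h2 : ∀ k, P (k + 1) ∨ P (k + 2)) (h1 : P 1)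
    (hd : ∀ d m, d ∣ m → P m → P d) (n : ℕ) :
    n ^ 2 ≤ 64 * ∑ m ∈ (Finset.Icc 1 n).filter P, Nat.totient m := by
  have h := aux_sum_lower P h2 h1 n
  have e1 : ∑ m ∈ (Finset.Icc 1 n).filter P, m ≤
      ∑ d ∈ (Finset.Icc 1 n).filter P, Nat.totient d * (n / d) := by
    calc ∑ m ∈ (Finset.Icc 1 n).filter P, m
        = ∑ m ∈ (Finset.Icc 1 n).filter P, ∑ d ∈ m.divisors, Nat.totient d := by
          refine Finset.sum_congr rfl fun m _ => ?_
          rw [Nat.sum_totient]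
      _ = ∑ m ∈ (Finset.Icc 1 n).filter P, ∑ d ∈ (Finset.Icc 1 n).filter P,
            if d ∣ m then Nat.totient d else 0 := by
          refine Finset.sum_congr rfl fun m hm => ?_
          rw [← Finset.sum_filter]
          refine Finset.sum_congr ?_ fun _ _ => rfl
          ext d
          simp only [Finset.mem_filter, Finset.mem_Icc, Nat.mem_divisors] at hm ⊢
          constructor
          · rintro ⟨a, b⟩
            have := Nat.le_of_dvd (by omega) a
            have := Nat.pos_of_dvd_of_pos a (by omega)
            exact ⟨⟨by omega, hd _ _ a hm.2⟩, a⟩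
          · rintro ⟨_, b⟩
            exact ⟨b, by omega⟩
      _ = ∑ d ∈ (Finset.Icc 1 n).filter P, ∑ m ∈ (Finset.Icc 1 n).filter P,
            if d ∣ m then Nat.totient d else 0 := Finset.sum_comm
      _ ≤ _ := by
          refine Finset.sum_le_sum fun d _ => ?_
          rw [← Finset.sum_filter, Finset.sum_const, smul_eq_mul, mul_comm]
          refine Nat.mul_le_mul_left _ ?_
          rw [← Nat.Ioc_filter_dvd_card_eq_div]
          refine Finset.card_le_card ?_
          intro m
          simp only [Finset.mem_filter, Finset.mem_Icc, Finset.mem_Ioc]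
          rintro ⟨⟨a, _⟩, b⟩
          exact ⟨by omega, b⟩
  have e2 : 8 * ∑ d ∈ (Finset.Icc 1 n).filter P, Nat.totient d * (n / d) ≤
      n ^ 2 + 64 * ∑ d ∈ (Finset.Icc 1 n).filter P, Nat.totient d := by
    have e3 : ∀ d ∈ (Finset.Icc 1 n).filter P, Nat.totient d * (n / d) ≤
        (if d ≤ n / 8 then n else 0) + 8 * Nat.totient d := by
      intro d hd'
      simp only [Finset.mem_filter, Finset.mem_Icc] at hd'
      split_ifs with h8
      · have := Nat.totient_le d
        have := Nat.mul_div_le n d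
        nlinarith [Nat.mul_le_mul_right (n / d) (Nat.totient_le d)]
      · have : n / d ≤ 8 := by
          rw [not_le, Nat.div_lt_iff_lt_mul (by norm_num)] at h8
          exact Nat.div_le_of_le_mul (by nlinarith)
        nlinarith [Nat.mul_le_mul_left (Nat.totient d) this]
    have e4 := Finset.sum_le_sum e3
    rw [Finset.sum_add_distrib, ← Finset.mul_sum] at e4
    have e5 : ∑ d ∈ (Finset.Icc 1 n).filter P, (if d ≤ n / 8 then n else 0) ≤ (n / 8) * n := by
      rw [← Finset.sum_filter, Finset.sum_const, smul_eq_mul]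
      refine Nat.mul_le_mul_right _ ?_
      calc _ ≤ (Finset.Icc 1 (n / 8)).card := by
            refine Finset.card_le_card ?_
            intro m
            simp only [Finset.mem_filter, Finset.mem_Icc]
            omega
        _ = n / 8 := by simp
    have e6 : 8 * ((n / 8) * n) ≤ n ^ 2 := by nlinarith [Nat.mul_div_le n 8]
    omega
  omega

lemma aux_growth (M ε : ℝ) (hM : 0 < M) (hε : 0 < ε) :
    ∃ C : ℝ, 0 < C ∧ ∀ n : ℕ, 1 ≤ n → M * (n : ℝ) ^ (2 - ε) ≤ (n : ℝ) ^ 2 / 64 + C := by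
  set B : ℝ := (64 * M) ^ (1 / ε) with hB
  have hB0 : 0 < B := by positivity
  refine ⟨M * B ^ 2, by positivity, fun n hn => ?_⟩
  have hn' : (1 : ℝ) ≤ n := by exact_mod_cast hn
  have hn0 : (0 : ℝ) < n := by linarith
  rcases le_total B n with h | h
  · have h1 : 64 * M ≤ (n : ℝ) ^ ε := by
      calc 64 * M = B ^ ε := by
            rw [hB, ← Real.rpow_mul (by positivity), one_div, inv_mul_cancel₀ hε.ne', Real.rpow_one]
        _ ≤ _ := Real.rpow_le_rpow hB0.le h hε.le
    have h2 : (n : ℝ) ^ (2 - ε) * (n : ℝ) ^ ε = (n : ℝ) ^ 2 := by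
      rw [← Real.rpow_add hn0]; simp
    have h3 : 0 < (n : ℝ) ^ (2 - ε) := by positivity
    have : 0 < M * B ^ 2 := by positivity
    nlinarith [mul_le_mul_of_nonneg_left h1 h3.le]
  · have h1 : (n : ℝ) ^ (2 - ε) ≤ (n : ℝ) ^ (2 : ℝ) :=
      Real.rpow_le_rpow_of_exponent_le hn' (by linarith)
    rw [Real.rpow_two] at h1
    have h2 : (n : ℝ) ^ 2 ≤ B ^ 2 := by gcongr
    have h3 : M * (n : ℝ) ^ (2 - ε) ≤ M * B ^ 2 := by gcongr; linarith
    have : 0 ≤ (n : ℝ) ^ 2 / 64 := by positivity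
    linarith

lemma aux_rad {F K : Type*} [Field F] [Field K] [Algebra F K] [Algebra.IsAlgebraic F K]
    (A : F[X]) (hA : A ≠ 0) (S : Finset K) (hS : ∀ x ∈ S, aeval x A = 0) :
    S.card ≤ (polyRad A).natDegree := by
  classical
  have hfin : {P : F[X] | P.Monic ∧ Irreducible P ∧ P ∣ A}.Finite := by
    refine Set.Finite.subset (UniqueFactorizationMonoid.normalizedFactors A).toFinset.finite_toSet ?_
    rintro P ⟨h1, h2, h3⟩
    simp only [Finset.mem_coe, Multiset.mem_toFinset]
    rw [UniqueFactorizationMonoid.mem_normalizedFactors_iff' hA]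
    exact ⟨h2, h1.normalize_eq_self, h3⟩
  have hrad : polyRad A = ∏ P ∈ hfin.toFinset, P := by
    unfold polyRad
    rw [finprod_mem_eq_finite_toFinset_prod _ hfin]
  have hne : polyRad A ≠ 0 := by
    rw [hrad, Finset.prod_ne_zero_iff]
    intro P hP
    exact ((hfin.mem_toFinset).1 hP).1.ne_zero
  have hne' : (polyRad A).map (algebraMap F K) ≠ 0 := by
    rwa [Ne, Polynomial.map_eq_zero]
  rw [← Polynomial.natDegree_map (algebraMap F K)]
  refine Polynomial.card_le_degree_of_subset_roots ?_
  intro x hx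
  rw [Polynomial.mem_roots hne', IsRoot.def, eval_map_algebraMap]
  have hint : IsIntegral F x := Algebra.IsIntegral.isIntegral x
  have hdvd : minpoly F x ∣ polyRad A := by
    rw [hrad]
    refine Finset.dvd_prod_of_mem _ (hfin.mem_toFinset.2 ?_)
    exact ⟨minpoly.monic hint, minpoly.irreducible hint, minpoly.dvd F x (hS x hx)⟩
  obtain ⟨Q, hQ⟩ := hdvd
  rw [hQ, map_mul, minpoly.aeval, zero_mul]

lemma aux_fiber {K : Type*} [Field K] [IsAlgClosed K] [DecidableEq K] (V : K[X])
    (hV : 0 < V.natDegree) (z : K) (hz : ∀ x, eval x (derivative V) = 0 → eval x V ≠ z) :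
    (V - C z).roots.toFinset.card = V.natDegree := by
  have hsep : (V - C z).Separable := by
    rw [Polynomial.separable_def,
      Polynomial.isCoprime_iff_aeval_ne_zero_of_isAlgClosed K K]
    intro x
    by_cases h : eval x (derivative V) = 0
    · left
      simpa [sub_eq_zero] using hz x h
    · right
      simpa using h
  rw [Multiset.toFinset_card_of_nodup (nodup_roots hsep),
    ← (IsAlgClosed.splits (V - C z)).natDegree_eq_card_roots, natDegree_sub_C]

lemma aux_main {F : Type*} [Field F] (U : F[X]) (hU : derivative U ≠ 0) (n : ℕ) :
    U.natDegree * n ^ 2 ≤ 64 * (polyRad (∏ i ∈ Finset.range n, (U ^ (n - i) - 1))).natDegree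
      + 64 * (U.natDegree * (derivative U).natDegree) := by
  classical
  let K := AlgebraicClosure F
  have hdeg : 0 < U.natDegree := by
    by_contra h
    apply hU
    rw [Polynomial.eq_C_of_natDegree_eq_zero (by omega : U.natDegree = 0), derivative_C]
  set V : K[X] := U.map (algebraMap F K) with hVdef
  have hVdeg : V.natDegree = U.natDegree := natDegree_map _
  have hV' : derivative V = (derivative U).map (algebraMap F K) := derivative_map _ _
  have hV0 : derivative V ≠ 0 := by rwa [hV', Ne, Polynomial.map_eq_zero]
  set P : ℕ → Prop := fun m => (m : K) ≠ 0 with hP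
  have htot := aux_totient P (by
      intro k
      by_contra! h
      simp only [hP, not_not] at h
      have : ((k + 2 : ℕ) : K) - ((k + 1 : ℕ) : K) = 0 := by rw [h.1, h.2, sub_zero]
      have h' : ((k + 2 : ℕ) : K) - ((k + 1 : ℕ) : K) = 1 := by
        rw [show k + 2 = (k + 1) + 1 from rfl, Nat.cast_succ (k + 1)]
        exact add_sub_cancel_left _ _
      exact one_ne_zero (h'.symm.trans this)) (by simp [hP])
      (by
        rintro d m ⟨c, rfl⟩ h h0
        apply h
        rw [Nat.cast_mul (α := K) d c]
        exact mul_eq_zero_of_left h0 _) n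
  set Z : Finset K := ((Finset.Icc 1 n).filter P).biUnion (fun m => primitiveRoots m K) with hZ
  have hZcard : Z.card = ∑ m ∈ (Finset.Icc 1 n).filter P, Nat.totient m := by
    rw [hZ, Finset.card_biUnion]
    · refine Finset.sum_congr rfl fun m hm => ?_
      have : NeZero (m : K) := ⟨(Finset.mem_filter.1 hm).2⟩
      obtain ⟨ζ, hζ⟩ := HasEnoughRootsOfUnity.exists_primitiveRoot K m
      exact hζ.card_primitiveRoots
    · intro a _ b _ hab
      exact IsPrimitiveRoot.disjoint hab
  set B : Finset K := (derivative V).roots.toFinset.image (fun x => eval x V) with hB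
  have hBcard : B.card ≤ (derivative U).natDegree := by
    calc B.card ≤ (derivative V).roots.toFinset.card := Finset.card_image_le
      _ ≤ Multiset.card (derivative V).roots := Multiset.toFinset_card_le _
      _ ≤ (derivative V).natDegree := card_roots' _
      _ = _ := by rw [hV', natDegree_map]
  set S : Finset K := (Z \ B).biUnion (fun z => (V - C z).roots.toFinset) with hS
  have hVC : ∀ z : K, V - C z ≠ 0 := by
    intro z h
    have : (V - C z).natDegree = U.natDegree := by rw [natDegree_sub_C, hVdeg]
    rw [h, natDegree_zero] at this
    omega
  have hmem : ∀ z x, x ∈ (V - C z).roots.toFinset ↔ eval x V = z := by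
    intro z x
    rw [Multiset.mem_toFinset, mem_roots (hVC z)]
    simp [sub_eq_zero]
  have hScard : S.card = (Z \ B).card * U.natDegree := by
    rw [hS, Finset.card_biUnion]
    · rw [Finset.sum_const_nat]
      intro z hz
      rw [← hVdeg]
      refine aux_fiber V (by omega) z ?_
      intro x hx hxz
      apply (Finset.mem_sdiff.1 hz).2
      rw [hB, Finset.mem_image]
      exact ⟨x, by rw [Multiset.mem_toFinset, mem_roots hV0]; exact hx, hxz⟩
    · intro a _ b _ hab
      refine Finset.disjoint_left.2 ?_
      intro x hx hx'
      rw [hmem] at hx hx'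
      exact hab (hx.symm.trans hx')
  have hA : ∏ i ∈ Finset.range n, (U ^ (n - i) - 1) ≠ 0 := by
    rw [Finset.prod_ne_zero_iff]
    intro i hi h
    have hi := Finset.mem_range.1 hi
    have h1 : (U ^ (n - i)).natDegree = 0 := by
      rw [sub_eq_zero.1 h, natDegree_one]
    rw [natDegree_pow] at h1
    have : 0 < (n - i) * U.natDegree := Nat.mul_pos (by omega) hdeg
    omega
  have hle := aux_rad (K := K) _ hA S (by
    intro x hx
    rw [hS, Finset.mem_biUnion] at hx
    obtain ⟨z, hz, hx⟩ := hx
    rw [hmem] at hx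
    have hz := (Finset.mem_sdiff.1 hz).1
    rw [hZ, Finset.mem_biUnion] at hz
    obtain ⟨m, hm, hz⟩ := hz
    have hm := Finset.mem_Icc.1 (Finset.mem_filter.1 hm).1
    have hz := (mem_primitiveRoots (by omega)).1 hz
    rw [map_prod]
    refine Finset.prod_eq_zero (i := n - m) (Finset.mem_range.2 (by omega)) ?_
    rw [show n - (n - m) = m by omega, map_sub, map_pow, map_one, ← eval_map_algebraMap, hx,
      hz.pow_eq_one, sub_self])
  have hsd : Z.card ≤ (Z \ B).card + (derivative U).natDegree := by
    have := Finset.le_card_sdiff B Z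
    omega
  rw [← hZcard] at htot
  rw [hScard] at hle
  nlinarith [Nat.mul_le_mul_left U.natDegree htot, Nat.mul_le_mul_left U.natDegree hsd]

/-- Let `U ∈ 𝒜 = 𝔽[t]` with `U' ≠ 0` and `δ = deg U`, and let `M, ε > 0`. Then there is a
constant `C₇ > 0` (depending only on `ε, M, p, U`) such that for every `n ≥ 1`,
`d_{n-1, n, U} ≥ δ M n^{2-ε} - C₇`, where `d_{m,n,U}` is the degree of the radical of
`Δ_{m,n,U} = (Uⁿ - 1)(U^{n-1} - 1) ⋯ (U^{n-m} - 1)`. -/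
theorem radical_degree_lower_bound_full {F : Type*} [Field F] [Fintype F]
    (U : F[X]) (hU : Polynomial.derivative U ≠ 0)
    (M ε : ℝ) (hM : 0 < M) (hε : 0 < ε) :
    ∃ C₇ : ℝ, 0 < C₇ ∧ ∀ n : ℕ, 1 ≤ n →
      (U.natDegree : ℝ) * M * (n : ℝ) ^ (2 - ε) - C₇ ≤
        ((polyRad (∏ i ∈ Finset.range n, (U ^ (n - i) - 1))).natDegree : ℝ) := by
  obtain ⟨C, hC, h⟩ := aux_growth M ε hM hε
  refine ⟨U.natDegree * (C + (derivative U).natDegree) + 1, by positivity, fun n hn => ?_⟩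
  have h1 := aux_main U hU n
  have h2 : (U.natDegree : ℝ) * (n : ℝ) ^ 2 ≤
      64 * ((polyRad (∏ i ∈ Finset.range n, (U ^ (n - i) - 1))).natDegree : ℝ)
      + 64 * (U.natDegree * (derivative U).natDegree) := by exact_mod_cast h1
  have h3 := mul_le_mul_of_nonneg_left (h n hn) (Nat.cast_nonneg (α := ℝ) U.natDegree)
  linarith
end

section
/- Let Γ ⊂ 𝒦* be a finitely generated subgroup of rank r, and consider the equation x + y = 1 with (x, y) ∈ Γ × Γ. Then there exists a finite subset 𝒳 of 𝒦* × 𝒦* of cardinality at most p^{2r} − 1 such that every solution (x, y) ∈ (Γ × Γ) with x and y not both lying in the algebraic closure of the prime field (i.e. (x,y) ∉ F̄ × F̄) has the form x = x₀^{p^k} and y = y₀^{p^k} for some (x₀, y₀) ∈ 𝒳 and some k ∈ ℕ₀. -/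
open Polynomial TensorProduct

/-- classes modulo `p` of a finitely generated abelian group without `p`-torsion -/
theorem ue_exists_classes (p : ℕ) [Fact p.Prime] (A : Type*) [AddCommGroup A] [Module.Finite ℤ A]
    (htf : ∀ a : A, p • a = 0 → a = 0) :
    ∃ φ : A → (Fin (Module.finrank ℤ A) → ZMod p),
      ∀ a b, φ a = φ b → ∃ c, a = b + p • c := by
  have hrk : Module.finrank ℤ (A ⧸ Submodule.torsion ℤ A) = Module.finrank ℤ A := by
    unfold Module.finrank
    rw [rank_quotient_eq_of_le_torsion le_rfl]
  let e := Module.finBasisOfFinrankEq ℤ (A ⧸ Submodule.torsion ℤ A) hrk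
  refine ⟨fun a i => ((e.repr (Submodule.Quotient.mk a) i : ℤ) : ZMod p), ?_⟩
  intro a b hab
  have h1 : ∀ i, ∃ c : ℤ, e.repr (Submodule.Quotient.mk (a - b)) i = p * c := by
    intro i
    have := congrFun hab i
    simp only at this
    rw [ZMod.intCast_eq_intCast_iff_dvd_sub] at this
    obtain ⟨c, hc⟩ := this
    refine ⟨-c, ?_⟩
    rw [Submodule.Quotient.mk_sub, map_sub, Finsupp.sub_apply]
    linarith
  choose c hc using h1
  obtain ⟨d, hd⟩ := Submodule.Quotient.mk_surjective (Submodule.torsion ℤ A) (∑ i, c i • e i)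
  have h2 : (Submodule.Quotient.mk (a - b) : A ⧸ Submodule.torsion ℤ A)
      = Submodule.Quotient.mk ((p : ℤ) • d) := by
    rw [Submodule.Quotient.mk_smul, hd, ← e.sum_repr (Submodule.Quotient.mk (a - b)),
      Finset.smul_sum]
    refine Finset.sum_congr rfl fun i _ => ?_
    rw [hc, mul_smul]
  rw [Submodule.Quotient.eq, Submodule.mem_torsion_iff] at h2
  obtain ⟨n, hn⟩ := h2
  set t := a - b - (p : ℤ) • d with ht
  have hn0 : (n : ℤ) ≠ 0 := nonZeroDivisors.ne_zero n.2
  have hn' : (n : ℤ) • t = 0 := hn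
  have hp : (p : ℤ) ≠ 0 := by exact_mod_cast (Fact.out : p.Prime).ne_zero
  have hpr : Prime (p : ℤ) := Nat.prime_iff_prime_int.mp Fact.out
  have key : ∃ m : ℤ, IsCoprime (p : ℤ) m ∧ m • t = 0 := by
    obtain ⟨k, m, hm, hnm⟩ := (FiniteMultiplicity.of_prime_left hpr hn0).exists_eq_pow_mul_and_not_dvd |> fun ⟨c, h1, h2⟩ =>
      (⟨_, c, h2, h1⟩ : ∃ k : ℕ, ∃ m : ℤ, ¬ (p : ℤ) ∣ m ∧ (n : ℤ) = (p : ℤ) ^ k * m)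
    refine ⟨m, (Prime.coprime_iff_not_dvd hpr).2 hm, ?_⟩
    rw [hnm, mul_smul] at hn'
    clear hnm
    generalize m • t = s at hn'
    induction k with
    | zero => simpa using hn'
    | succ k ih =>
      apply ih
      apply htf
      rw [pow_succ', mul_smul] at hn'
      simpa using hn'
  obtain ⟨m, ⟨u, v, huv⟩, hm⟩ := key
  refine ⟨d + u • t, ?_⟩
  have : t = (p : ℤ) • (u • t) := by
    conv_lhs => rw [← one_smul ℤ t, ← huv, add_smul, mul_smul v, hm, smul_zero, add_zero,
      mul_comm, mul_smul]
  have h3 : a = b + ((p : ℤ) • d + t) := by rw [ht]; abel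
  rw [h3]
  conv_lhs => rw [this]
  rw [← smul_add, natCast_zsmul]

/-- two primitive solutions in the same class agree -/
theorem ue_class_inj {K : Type*} [Field K] (p : ℕ) [Fact p.Prime] [CharP K p]
    (x y a b : K) (h : x + y = 1) (h' : x * a ^ p + y * b ^ p = 1)
    (hx : ∀ z, x ≠ z ^ p) : a ^ p = 1 ∧ b ^ p = 1 := by
  have hab : a ^ p = b ^ p := by
    by_contra hne
    apply hx ((1 - b) / (a - b))
    rw [div_pow, sub_pow_char, sub_pow_char, one_pow, eq_div_iff (sub_ne_zero.2 hne)]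
    linear_combination h' - b ^ p * h
  have : b ^ p = 1 := by
    rw [hab] at h'
    linear_combination h' - b ^ p * h
  exact ⟨hab.trans this, this⟩

theorem ue_const {F : Type*} [Field F] (x : RatFunc F) (hx0 : x ≠ 0) :
    ∃ N : ℕ, ∀ m, N < m → ∀ z : RatFunc F, x = z ^ m →
      x ∈ Set.range (algebraMap F (RatFunc F)) := by
  refine ⟨x.num.natDegree + x.denom.natDegree, ?_⟩
  intro m hm z hz
  have hz0 : z ≠ 0 := by
    rintro rfl
    rw [zero_pow (by omega)] at hz
    exact hx0 hz
  have hnd : x.num * z.denom ^ m = z.num ^ m * x.denom := by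
    apply RatFunc.algebraMap_injective F
    have h1 := RatFunc.num_div_denom x
    have h2 := RatFunc.num_div_denom z
    have h3 : algebraMap F[X] (RatFunc F) x.denom ≠ 0 :=
      RatFunc.algebraMap_ne_zero x.denom_ne_zero
    have h4 : algebraMap F[X] (RatFunc F) z.denom ≠ 0 :=
      RatFunc.algebraMap_ne_zero z.denom_ne_zero
    have h5 := hz
    rw [← h1, ← h2, div_pow, div_eq_div_iff h3 (pow_ne_zero _ h4)] at h5
    simpa only [map_mul, map_pow] using h5
  have hco : IsCoprime (z.num ^ m) (z.denom ^ m) := (RatFunc.isCoprime_num_denom z).pow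
  have d1 : z.num ^ m ∣ x.num := hco.dvd_of_dvd_mul_right ⟨_, hnd⟩
  have d2 : z.denom ^ m ∣ x.denom :=
    hco.symm.dvd_of_dvd_mul_left ⟨x.num, by rw [← hnd, mul_comm]⟩
  have l1 := natDegree_le_of_dvd d1 (RatFunc.num_ne_zero hx0)
  have l2 := natDegree_le_of_dvd d2 x.denom_ne_zero
  rw [natDegree_pow] at l1 l2
  have e1 : z.num.natDegree = 0 := by
    by_contra h
    have := Nat.le_mul_of_pos_right m (Nat.pos_of_ne_zero h)
    omega
  have e2 : z.denom.natDegree = 0 := by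
    by_contra h
    have := Nat.le_mul_of_pos_right m (Nat.pos_of_ne_zero h)
    omega
  obtain ⟨c, hc⟩ := natDegree_eq_zero.1 e1
  obtain ⟨d, hd⟩ := natDegree_eq_zero.1 e2
  refine ⟨(c / d) ^ m, ?_⟩
  rw [hz, ← RatFunc.num_div_denom z, ← hc, ← hd, map_pow, map_div₀]
  simp [RatFunc.algebraMap_C, RatFunc.algebraMap_eq_C]

/-- the group of `p^N`-th roots -/
def ueRoot {G : Type*} [CommGroup G] (Γ : Subgroup G) (n : ℕ) : Subgroup G :=
  Γ.comap (powMonoidHom n)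

theorem ue_pow_inj {K : Type*} [Field K] (p : ℕ) [Fact p.Prime] [CharP K p] (n : ℕ)
    (x y : Kˣ) (h : x ^ p ^ n = y ^ p ^ n) : x = y := by
  apply Units.ext
  have := congrArg (Units.val) h
  push_cast at this
  exact iterateFrobenius_inj K p n (by simpa [iterateFrobenius_def] using this)

theorem ue_root_classes {K : Type*} [Field K] (p : ℕ) [Fact p.Prime] [CharP K p]
    (Γ : Subgroup Kˣ) (hΓfg : Group.FG Γ)
    (r : ℕ) (hr : Module.finrank ℚ (ℚ ⊗[ℤ] (Additive Γ)) = r) (N : ℕ) :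
    ∃ φ : ueRoot Γ (p ^ N) → (Fin r → ZMod p),
      ∀ a b, φ a = φ b → ∃ c, a = b * c ^ p := by
  have : Module.Finite ℤ (Additive Γ) :=
    Module.Finite.iff_addGroup_fg.2 (GroupFG.iff_add_fg.1 hΓfg)
  have hr' : Module.finrank ℤ (Additive Γ) = r := by
    rw [← hr]
    exact ((TensorProduct.isBaseChange ℤ (Additive Γ) ℚ).finrank_eq).symm
  let f : ueRoot Γ (p ^ N) →* Γ :=
    ((powMonoidHom (p ^ N)).comp (ueRoot Γ (p ^ N)).subtype).codRestrict Γ (fun x => x.2)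
  let g : Additive (ueRoot Γ (p ^ N)) →ₗ[ℤ] Additive Γ := (MonoidHom.toAdditive f).toIntLinearMap
  have hg : Function.Injective g := by
    intro x y hxy
    have h1 : f x.toMul = f y.toMul := hxy
    have h2 := congrArg Subtype.val h1
    have h3 := ue_pow_inj p N _ _ h2
    exact Subtype.ext h3
  have := Module.Finite.of_injective g hg
  have hle := LinearMap.finrank_le_finrank_of_injective hg
  rw [hr'] at hle
  obtain ⟨φ, hφ⟩ := ue_exists_classes p (Additive (ueRoot Γ (p ^ N))) (by
    intro a ha
    have h2 : ((a.toMul : Kˣ)) ^ p = 1 := congrArg Subtype.val (congrArg Additive.toMul ha)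
    have h3 := ue_pow_inj p 1 (a.toMul : Kˣ) 1 (by simpa using h2)
    exact Subtype.ext h3)
  refine ⟨fun a i => if h : (i : ℕ) < Module.finrank ℤ (Additive (ueRoot Γ (p ^ N))) then
      φ (Additive.ofMul a) ⟨i, h⟩ else 0, ?_⟩
  intro a b hab
  obtain ⟨c, hc⟩ := hφ (Additive.ofMul a) (Additive.ofMul b) (by
    funext i
    have := congrFun hab ⟨i, i.2.trans_le hle⟩
    simpa using this)
  exact ⟨c.toMul, congrArg Additive.toMul hc⟩

/-- primitive solutions -/
def uePrim {K : Type*} [Field K] (p : ℕ) (Γ : Subgroup Kˣ) : Set (Kˣ × Kˣ) :=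
  {z | (z.1 : K) + z.2 = 1 ∧ (∀ w : K, (z.1 : K) ≠ w ^ p) ∧
    ∃ k, z.1 ∈ ueRoot Γ (p ^ k) ∧ z.2 ∈ ueRoot Γ (p ^ k)}

theorem ue_root_mono {G : Type*} [CommGroup G] (Γ : Subgroup G) (p : ℕ) {m n : ℕ} (h : m ≤ n) :
    ueRoot Γ (p ^ m) ≤ ueRoot Γ (p ^ n) := by
  intro x hx
  change x ^ p ^ m ∈ Γ at hx
  change x ^ p ^ n ∈ Γ
  rw [← Nat.add_sub_cancel' h, pow_add, pow_mul]
  exact Γ.pow_mem hx _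

theorem ue_prim_card {K : Type*} [Field K] (p : ℕ) [Fact p.Prime] [CharP K p]
    (Γ : Subgroup Kˣ) (hΓfg : Group.FG Γ)
    (r : ℕ) (hr : Module.finrank ℚ (ℚ ⊗[ℤ] (Additive Γ)) = r)
    (S : Finset (Kˣ × Kˣ)) (hS : (S : Set (Kˣ × Kˣ)) ⊆ uePrim p Γ) :
    S.card ≤ p ^ (2 * r) - 1 := by
  classical
  have hN : ∃ N, ∀ z ∈ S, z.1 ∈ ueRoot Γ (p ^ N) ∧ z.2 ∈ ueRoot Γ (p ^ N) := by
    have : ∀ z : S, ∃ k, z.1.1 ∈ ueRoot Γ (p ^ k) ∧ z.1.2 ∈ ueRoot Γ (p ^ k) :=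
      fun z => (hS z.2).2.2
    choose k hk using this
    refine ⟨Finset.univ.sup k, fun z hz => ?_⟩
    have hle : k ⟨z, hz⟩ ≤ Finset.univ.sup k := Finset.le_sup (Finset.mem_univ _)
    exact ⟨ue_root_mono Γ p hle (hk ⟨z, hz⟩).1, ue_root_mono Γ p hle (hk ⟨z, hz⟩).2⟩
  obtain ⟨N, hN⟩ := hN
  obtain ⟨φ, hφ⟩ := ue_root_classes p Γ hΓfg r hr N
  let ψ : S → (Fin r → ZMod p) × (Fin r → ZMod p) := fun z =>
    (φ ⟨z.1.1, (hN z.1 z.2).1⟩, φ ⟨z.1.2, (hN z.1 z.2).2⟩)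
  have hψ : Function.Injective ψ := by
    intro z w h
    obtain ⟨a, ha⟩ := hφ _ _ (congrArg Prod.fst h)
    obtain ⟨b, hb⟩ := hφ _ _ (congrArg Prod.snd h)
    have ha1 : z.1.1 = w.1.1 * (a : Kˣ) ^ p := congrArg Subtype.val ha
    have hb1 : z.1.2 = w.1.2 * (b : Kˣ) ^ p := congrArg Subtype.val hb
    have ha2 : (z.1.1 : K) = w.1.1 * ((a : Kˣ) : K) ^ p := by rw [ha1]; push_cast; rfl
    have hb2 : (z.1.2 : K) = w.1.2 * ((b : Kˣ) : K) ^ p := by rw [hb1]; push_cast; rfl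
    have h1 := (hS z.2).1
    rw [ha2, hb2] at h1
    obtain ⟨e1, e2⟩ := ue_class_inj p _ _ _ _ (hS w.2).1 h1 (hS w.2).2.1
    rw [e1, mul_one] at ha2
    rw [e2, mul_one] at hb2
    exact Subtype.ext (Prod.ext (Units.ext ha2) (Units.ext hb2))
  have hne : ∀ z, ψ z ≠ (φ 1, φ 1) := by
    intro z h
    obtain ⟨a, ha⟩ := hφ _ _ (congrArg Prod.fst h)
    have ha1 : z.1.1 = 1 * (a : Kˣ) ^ p := congrArg Subtype.val ha
    apply (hS z.2).2.1 ((a : Kˣ) : K)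
    rw [ha1]; push_cast; rw [one_mul]
  have hc : (Finset.univ.image ψ).card ≤
      ((Finset.univ : Finset ((Fin r → ZMod p) × (Fin r → ZMod p))).erase (φ 1, φ 1)).card := by
    apply Finset.card_le_card
    intro v hv
    obtain ⟨z, -, rfl⟩ := Finset.mem_image.1 hv
    exact Finset.mem_erase.2 ⟨hne z, Finset.mem_univ _⟩
  rw [Finset.card_image_of_injective _ hψ, Finset.card_erase_of_mem (Finset.mem_univ _)] at hc
  simpa [ZMod.card, two_mul, pow_add] using hc

/-- **S-unit equation in characteristic `p`.** Let `𝒦 = 𝔽(t)` with `𝔽` a finite field of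
characteristic `p`, and let `Γ ⊆ 𝒦*` be a finitely generated subgroup of (free) rank `r`.
Then there is a finite set `𝒳 ⊆ 𝒦* × 𝒦*` of cardinality at most `p^{2r} - 1` such that
every solution of `x + y = 1` with `x, y ∈ Γ` not both constant (constants being exactly the
elements of `𝒦` lying in the algebraic closure of the prime field) has the form
`x = x₀^{p^k}`, `y = y₀^{p^k}` for some `(x₀, y₀) ∈ 𝒳` and `k ∈ ℕ₀`. -/
theorem unit_equation_char_p {F : Type*} [Field F] [Fintype F]
    (p : ℕ) [Fact p.Prime] [CharP F p]
    (Γ : Subgroup (RatFunc F)ˣ) (hΓfg : Group.FG Γ)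
    (r : ℕ) (hr : Module.finrank ℚ (ℚ ⊗[ℤ] (Additive Γ)) = r) :
    ∃ 𝒳 : Finset ((RatFunc F)ˣ × (RatFunc F)ˣ), 𝒳.card ≤ p ^ (2 * r) - 1 ∧
      ∀ x y : (RatFunc F)ˣ, x ∈ Γ → y ∈ Γ →
        (x : RatFunc F) + (y : RatFunc F) = 1 →
        ¬((x : RatFunc F) ∈ Set.range (algebraMap F (RatFunc F)) ∧
          (y : RatFunc F) ∈ Set.range (algebraMap F (RatFunc F))) →
        ∃ z ∈ 𝒳, ∃ k : ℕ, x = z.1 ^ p ^ k ∧ y = z.2 ^ p ^ k := by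
  classical
  have : CharP (RatFunc F) p := charP_of_injective_algebraMap
    (algebraMap F (RatFunc F)).injective p
  have hfin : (uePrim p Γ).Finite := by
    by_contra hinf
    obtain ⟨S, hS, hcard⟩ := Set.Infinite.exists_subset_card_eq hinf (p ^ (2 * r) - 1 + 1)
    have := ue_prim_card p Γ hΓfg r hr S hS
    omega
  refine ⟨hfin.toFinset, ue_prim_card p Γ hΓfg r hr _ (by simp), ?_⟩
  intro x y hx hy hxy hnc
  have hp : p.Prime := Fact.out
  have hex : ∃ k, ¬ ∃ z : RatFunc F, (x : RatFunc F) = z ^ p ^ k := by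
    by_contra hall
    push Not at hall
    apply hnc
    have hxc : (x : RatFunc F) ∈ Set.range (algebraMap F (RatFunc F)) := by
      obtain ⟨N, hN⟩ := ue_const (x : RatFunc F) x.ne_zero
      obtain ⟨z, hz⟩ := hall N
      exact hN _ (Nat.lt_pow_self hp.one_lt) z hz
    refine ⟨hxc, ?_⟩
    obtain ⟨c, hc⟩ := hxc
    exact ⟨1 - c, by rw [map_sub, map_one, hc]; linear_combination -hxy⟩
  have hsp := Nat.find_spec hex
  rcases hk : Nat.find hex with _ | k
  · rw [hk] at hsp
    exact absurd ⟨(x : RatFunc F), by simp⟩ hsp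
  rw [hk] at hsp
  obtain ⟨z, hz⟩ := not_not.1 (Nat.find_min hex (m := k) (by omega))
  have hpk : p ^ k ≠ 0 := pow_ne_zero _ hp.ne_zero
  have hyz : (y : RatFunc F) = (1 - z) ^ p ^ k := by
    rw [sub_pow_char_pow, ← hz, one_pow]; linear_combination hxy
  have hz0 : z ≠ 0 := by
    rintro rfl
    rw [zero_pow hpk] at hz
    exact x.ne_zero hz
  have hz1 : 1 - z ≠ 0 := by
    intro h
    rw [h, zero_pow hpk] at hyz
    exact y.ne_zero hyz
  have hxu : x = Units.mk0 z hz0 ^ p ^ k := Units.ext (by push_cast; exact hz)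
  have hyu : y = Units.mk0 (1 - z) hz1 ^ p ^ k := Units.ext (by push_cast; exact hyz)
  refine ⟨(Units.mk0 z hz0, Units.mk0 (1 - z) hz1), ?_, k, hxu, hyu⟩
  rw [Set.Finite.mem_toFinset]
  refine ⟨by simp, ?_, k, ?_, ?_⟩
  · intro w hw
    apply hsp
    refine ⟨w, ?_⟩
    rw [hz, pow_succ', pow_mul, ← hw]
    rfl
  · change Units.mk0 z hz0 ^ p ^ k ∈ Γ
    rwa [← hxu]
  · change Units.mk0 (1 - z) hz1 ^ p ^ k ∈ Γ
    rwa [← hyu]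
end

section
/- For every n ∈ ℕ, q^n ≤ deg(∏_{P ∈ 𝒫⁺, deg(P) ≤ n} P) < 2·q^n, where the product is over all monic irreducible polynomials of degree at most n in 𝒜. -/
open Polynomial

lemma aux_sum_lt (q n : ℕ) (hq : 2 ≤ q) : ∑ d ∈ Finset.range n, q ^ (d + 1) < 2 * q ^ n := by
  induction n with
  | zero => simp
  | succ n ih =>
    rw [Finset.sum_range_succ]
    have : 2 * q ^ n ≤ q ^ (n + 1) := by
      rw [pow_succ, mul_comm]
      exact Nat.mul_le_mul_left _ hq
    omega

/-- For every `n ∈ ℕ`, `q^n ≤ deg(∏_{P monic irreducible, deg P ≤ n} P) < 2 q^n`, where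
`q` is the cardinality of the finite field `𝔽` and the product is over all monic
irreducible polynomials in `𝒜 = 𝔽[t]` of degree at most `n`. -/
theorem degree_product_of_monic_irreducibles {F : Type*} [Field F] [Fintype F]
    (q : ℕ) (hq : q = Fintype.card F) (n : ℕ) (hn : 1 ≤ n) :
    q ^ n ≤ (∏ᶠ P ∈ {P : F[X] | P.Monic ∧ Irreducible P ∧ P.natDegree ≤ n}, P).natDegree ∧
      (∏ᶠ P ∈ {P : F[X] | P.Monic ∧ Irreducible P ∧ P.natDegree ≤ n}, P).natDegree
        < 2 * q ^ n := by
  classical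
  have hq2 : 1 < q := hq ▸ Fintype.one_lt_card
  have hqN : Nat.card F = q := by rw [hq, Nat.card_eq_fintype_card]
  set G : F[X] := ∏ d ∈ Finset.range n, (X ^ q ^ (d + 1) - X) with hG
  have hne : ∀ d ∈ Finset.range n, (X ^ q ^ (d + 1) - X : F[X]) ≠ 0 := fun d _ =>
    FiniteField.X_pow_card_pow_sub_X_ne_zero F (Nat.succ_ne_zero d) hq2
  have hG0 : G ≠ 0 := Finset.prod_ne_zero_iff.2 hne
  have hdeg : G.natDegree = ∑ d ∈ Finset.range n, q ^ (d + 1) := by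
    rw [hG, natDegree_prod _ _ hne]
    exact Finset.sum_congr rfl fun d _ =>
      FiniteField.X_pow_card_pow_sub_X_natDegree_eq F (Nat.succ_ne_zero d) hq2
  have hdvd : ∀ P : F[X], Irreducible P → P.natDegree ≤ n → P ∣ G := by
    intro P hP hPn
    have hpos := hP.natDegree_pos
    have h1 := hP.natDegree_dvd_iff_dvd_X_pow_card_pow_sub_X.1 (dvd_refl P.natDegree)
    rw [hqN] at h1
    refine h1.trans ?_
    have h2 := Finset.dvd_prod_of_mem (fun d => (X ^ q ^ (d + 1) - X : F[X]))
      (Finset.mem_range.2 (show P.natDegree - 1 < n by omega))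
    simpa only [Nat.sub_add_cancel hpos] using h2
  have hfin : {P : F[X] | P.Monic ∧ Irreducible P ∧ P.natDegree ≤ n}.Finite := by
    refine (UniqueFactorizationMonoid.normalizedFactors G).toFinset.finite_toSet.subset ?_
    rintro P ⟨hm, hi, hd⟩
    have := UniqueFactorizationMonoid.exists_mem_normalizedFactors_of_dvd hG0 hi (hdvd P hi hd)
    obtain ⟨Q, hQ, ha⟩ := this
    have hQm : Q.Monic := by
      have h := UniqueFactorizationMonoid.normalize_normalized_factor Q hQ
      rw [← h]
      exact monic_normalize (UniqueFactorizationMonoid.irreducible_of_normalized_factor Q hQ).ne_zero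
    rw [eq_of_monic_of_associated hm hQm ha]
    exact Multiset.mem_toFinset.2 hQ
  rw [finprod_mem_eq_finite_toFinset_prod _ hfin]
  have hS0 : ∏ P ∈ hfin.toFinset, P ≠ 0 := by
    refine Finset.prod_ne_zero_iff.2 fun P hP => ?_
    exact ((hfin.mem_toFinset.1 hP).1).ne_zero
  constructor
  · have hn0 : n ≠ 0 := by omega
    obtain ⟨p, hp⟩ := CharP.exists F
    have hpq : p ∣ q ^ n := by
      refine dvd_pow ?_ hn0
      rw [← CharP.cast_eq_zero_iff F p, hq]
      exact Nat.cast_card_eq_zero F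
    have hf0 : (X ^ q ^ n - X : F[X]) ≠ 0 := FiniteField.X_pow_card_pow_sub_X_ne_zero F hn0 hq2
    have hsq : Squarefree (X ^ q ^ n - X : F[X]) := (galois_poly_separable p _ hpq).squarefree
    rw [← FiniteField.X_pow_card_pow_sub_X_natDegree_eq F hn0 hq2]
    refine natDegree_le_of_dvd ?_ hS0
    refine (hsq.isRadical.dvd_radical hf0).trans ?_
    refine Finset.prod_dvd_prod_of_subset _ _ _ ?_
    intro P hP
    have hP' : P ∈ UniqueFactorizationMonoid.normalizedFactors (X ^ q ^ n - X : F[X]) := by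
      exact UniqueFactorizationMonoid.mem_primeFactors.1 hP
    have hi := UniqueFactorizationMonoid.irreducible_of_normalized_factor P hP'
    rw [hfin.mem_toFinset]
    refine ⟨?_, hi, ?_⟩
    · rw [← UniqueFactorizationMonoid.normalize_normalized_factor P hP']
      exact monic_normalize hi.ne_zero
    · refine Nat.le_of_dvd hn (hi.natDegree_dvd_of_dvd_X_pow_card_pow_sub_X ?_)
      rw [hqN]
      exact UniqueFactorizationMonoid.dvd_of_mem_normalizedFactors hP'
  · refine lt_of_le_of_lt ?_ (aux_sum_lt q n hq2)
    rw [← hdeg]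
    refine natDegree_le_of_dvd ?_ hG0
    refine Finset.prod_dvd_of_coprime ?_ ?_
    · intro P hP Q hQ hPQ
      obtain ⟨hPm, hPi, -⟩ := hfin.mem_toFinset.1 hP
      obtain ⟨hQm, hQi, -⟩ := hfin.mem_toFinset.1 hQ
      refine (hPi.coprime_iff_not_dvd).2 fun h => hPQ ?_
      exact eq_of_monic_of_associated hPm hQm (hPi.associated_of_dvd hQi h)
    · intro P hP
      obtain ⟨-, hPi, hPd⟩ := hfin.mem_toFinset.1 hP
      exact hdvd P hPi hPd
end

section
/- There exists a map g : 𝒜 → 𝒜 such that g(A + B·P) ≡ g(A) (mod P) for every A, B ∈ 𝒜 and every irreducible P ∈ 𝒫, and such that for every n ∈ ℕ and every B ∈ 𝒜 with deg(B) = n one has q^n ≤ deg(g(B)) < 2·q^n; consequently g is not a polynomial map. -/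
open Polynomial

theorem sum_bound (q n : ℕ) (hq : 2 ≤ q) :
    ∑ d ∈ Finset.Icc 1 n, q ^ d < 2 * q ^ n := by
  induction n with
  | zero => simp
  | succ n ih =>
    rw [Finset.sum_Icc_succ_top (by omega)]
    have : 2 * q ^ n ≤ q ^ (n+1) := by
      rw [pow_succ, mul_comm]; exact Nat.mul_le_mul_left _ hq
    omega

theorem step_exists {F : Type*} [Field F] [Fintype F] (n : ℕ) (f : F[X] → F[X]) :
    ∃ r : F[X], (∀ P : F[X], P.Monic → Irreducible P → P.natDegree ≤ n → P ∣ r - f P) ∧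
      Fintype.card F ^ n ≤ r.natDegree ∧ r.natDegree < 2 * Fintype.card F ^ n := by
  classical
  set q := Fintype.card F with hq
  have hq2 : 2 ≤ q := Fintype.one_lt_card
  set T : F[X] := ∏ d ∈ Finset.Icc 1 n, (X ^ q ^ d - X) with hT
  have hne : ∀ d ∈ Finset.Icc 1 n, (X ^ q ^ d - X : F[X]) ≠ 0 := fun d hd =>
    FiniteField.X_pow_card_pow_sub_X_ne_zero F (by simp at hd; omega) hq2
  have hT0 : T ≠ 0 := Finset.prod_ne_zero_iff.mpr hne
  have hTdeg : T.natDegree < 2 * q ^ n := by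
    rw [hT, natDegree_prod _ _ hne]
    refine lt_of_eq_of_lt (Finset.sum_congr rfl fun d hd => ?_) (sum_bound q n hq2)
    exact FiniteField.X_pow_card_pow_sub_X_natDegree_eq F (by simp at hd; omega) hq2
  set S := (UniqueFactorizationMonoid.normalizedFactors T).toFinset with hS
  have hmem : ∀ P, P ∈ S ↔ Irreducible P ∧ P.Monic ∧ P ∣ T := by
    intro P
    rw [hS, Multiset.mem_toFinset, Polynomial.mem_normalizedFactors_iff hT0]
  set M : F[X] := ∏ P ∈ S, P with hM
  have hMm : M.Monic := monic_prod_of_monic _ _ fun P hP => ((hmem P).1 hP).2.1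
  have hcop : ∀ P ∈ S, ∀ Q ∈ S, P ≠ Q → IsCoprime P Q := by
    intro P hP Q hQ hne
    obtain ⟨hPi, hPm, -⟩ := (hmem P).1 hP
    obtain ⟨hQi, hQm, -⟩ := (hmem Q).1 hQ
    rw [hPi.coprime_iff_not_dvd]
    intro h
    exact hne (eq_of_monic_of_associated hPm hQm (hPi.associated_of_dvd hQi h))
  have hMT : M ∣ T := Finset.prod_dvd_of_coprime
    (fun P hP Q hQ h => hcop P hP Q hQ h) fun P hP => ((hmem P).1 hP).2.2
  have hMdeg : M.natDegree < 2 * q ^ n := (natDegree_le_of_dvd hMT hT0).trans_lt hTdeg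
  obtain ⟨r, hr⟩ := Ideal.exists_forall_sub_mem_ideal
    (I := fun P : {P // P ∈ S} => Ideal.span {P.1}) (by
      intro P Q hne
      exact (Ideal.isCoprime_span_singleton_iff _ _).2
        (hcop P.1 P.2 Q.1 Q.2 fun h => hne (Subtype.ext h))) (fun P => f P.1)
  have hdeg : (r %ₘ M + M * X ^ (q ^ n - M.natDegree)).natDegree =
      M.natDegree + (q ^ n - M.natDegree) := by
    have h1 : (M * X ^ (q ^ n - M.natDegree)).natDegree =
        M.natDegree + (q ^ n - M.natDegree) := natDegree_mul_X_pow _ hMm.ne_zero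
    rw [natDegree_add_eq_right_of_degree_lt, h1]
    refine (degree_modByMonic_lt r hMm).trans_le ?_
    exact degree_le_mul_left _ (by simp)
  refine ⟨r %ₘ M + M * X ^ (q ^ n - M.natDegree), ?_, ?_, ?_⟩
  · intro P hPm hPi hPn
    have hPS : P ∈ S := by
      refine (hmem P).2 ⟨hPi, hPm, ?_⟩
      have h1 : P ∣ X ^ q ^ P.natDegree - X := by
        rw [hq, Fintype.card_eq_nat_card]
        exact hPi.natDegree_dvd_iff_dvd_X_pow_card_pow_sub_X.1 dvd_rfl
      refine h1.trans (Finset.dvd_prod_of_mem (fun d => (X ^ q ^ d - X : F[X])) ?_)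
      rw [Finset.mem_Icc]
      exact ⟨hPi.natDegree_pos, hPn⟩
    have h1 := hr ⟨P, hPS⟩
    rw [Ideal.mem_span_singleton] at h1
    have hPM : P ∣ M := Finset.dvd_prod_of_mem _ hPS
    have h2 : r %ₘ M + M * X ^ (q ^ n - M.natDegree) - f P =
        (r - f P) + M * (X ^ (q ^ n - M.natDegree) - r /ₘ M) := by
      have := modByMonic_add_div r M
      linear_combination this
    rw [h2]
    exact dvd_add h1 (hPM.mul_right _)
  · rw [hdeg]; omega
  · rw [hdeg]; omega

open Classical in
/-- The recursively defined map. -/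
noncomputable def gmap {F : Type*} [Field F] [Fintype F] (B : F[X]) : F[X] :=
  Classical.choose (step_exists B.natDegree (fun P =>
    if h : P.Monic ∧ Irreducible P ∧ P.natDegree ≤ B.natDegree then gmap (B %ₘ P) else 0))
termination_by B.natDegree
decreasing_by
  all_goals exact (natDegree_modByMonic_lt B h.1 h.2.1.ne_one).trans_le h.2.2

theorem gmap_spec {F : Type*} [Field F] [Fintype F] (B : F[X]) :
    (∀ P : F[X], P.Monic → Irreducible P → P.natDegree ≤ B.natDegree →
      P ∣ gmap B - gmap (B %ₘ P)) ∧
    Fintype.card F ^ B.natDegree ≤ (gmap B).natDegree ∧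
      (gmap B).natDegree < 2 * Fintype.card F ^ B.natDegree := by
  classical
  have h := Classical.choose_spec (step_exists B.natDegree (fun P =>
    if h : P.Monic ∧ Irreducible P ∧ P.natDegree ≤ B.natDegree then gmap (B %ₘ P) else 0))
  have e := gmap.eq_1 B
  refine ⟨fun P h1 h2 h3 => ?_, ?_, ?_⟩
  · have := h.1 P h1 h2 h3
    rw [dif_pos ⟨h1, h2, h3⟩] at this
    rw [e]
    exact this
  · rw [e]; exact h.2.1
  · rw [e]; exact h.2.2

theorem gmap_mod {F : Type*} [Field F] [Fintype F] (B P : F[X]) (hm : P.Monic)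
    (hi : Irreducible P) : P ∣ gmap B - gmap (B %ₘ P) := by
  rcases le_or_gt P.natDegree B.natDegree with h | h
  · exact (gmap_spec B).1 P hm hi h
  · rw [(modByMonic_eq_self_iff hm).2 (degree_lt_degree h)]; simp

theorem natDegree_eval_bound {F : Type*} [Field F] (H : F[X][X]) :
    ∃ C N : ℕ, ∀ A : F[X], (H.eval A).natDegree ≤ C + N * A.natDegree := by
  refine ⟨∑ i ∈ H.support, (H.coeff i).natDegree, H.natDegree, fun A => ?_⟩
  rw [eval_eq_sum, Polynomial.sum]
  refine natDegree_sum_le_of_forall_le _ _ fun i hi => ?_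
  refine natDegree_mul_le.trans (add_le_add ?_ ?_)
  · exact Finset.single_le_sum (f := fun i => (H.coeff i).natDegree) (fun _ _ => Nat.zero_le _) hi
  · exact natDegree_pow_le.trans (Nat.mul_le_mul_right _ (le_natDegree_of_mem_supp _ hi))

theorem growth (C N : ℕ) : ∃ n, 1 ≤ n ∧ C + N * n < 2 ^ n := by
  refine ⟨2 * (C + 2 * N + 1), by omega, ?_⟩
  have h : C + 2 * N + 1 < 2 ^ (C + 2 * N + 1) := Nat.lt_two_pow_self
  rw [mul_comm 2 (C + 2 * N + 1), pow_mul]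
  generalize 2 ^ (C + 2 * N + 1) = y at *
  nlinarith [Nat.zero_le (C * N), Nat.zero_le (C * C)]

/-- There is a map `g : 𝒜 → 𝒜` satisfying `g(A + B·P) ≡ g(A) mod P` for all `A, B ∈ 𝒜`
and irreducible `P`, such that `q^n ≤ deg(g(B)) < 2 q^n` for every `n ∈ ℕ` and every
`B ∈ 𝒜` of degree `n`; consequently `g` is not a polynomial map. -/
theorem exists_nonpolynomial_congruence_preserving_map {F : Type*} [Field F] [Fintype F]
    (q : ℕ) (hq : q = Fintype.card F) :
    ∃ g : F[X] → F[X],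
      (∀ A B P : F[X], Irreducible P → P ∣ g (A + B * P) - g A) ∧
      (∀ n : ℕ, 1 ≤ n → ∀ B : F[X], B.natDegree = n →
        q ^ n ≤ (g B).natDegree ∧ (g B).natDegree < 2 * q ^ n) ∧
      ¬ ∃ G : Polynomial (RatFunc F), ∀ A : F[X],
        Polynomial.eval (algebraMap F[X] (RatFunc F) A) G =
          algebraMap F[X] (RatFunc F) (g A) := by
  subst hq
  refine ⟨gmap, ?_, ?_, ?_⟩
  · intro A B P hP
    classical
    set Q := normalize P with hQ
    have hass : Associated Q P := normalize_associated P
    have hQm : Q.Monic := monic_normalize hP.ne_zero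
    have hQi : Irreducible Q := hass.irreducible_iff.2 hP
    have hmod : (A + B * P) %ₘ Q = A %ₘ Q := by
      rw [add_modByMonic, (modByMonic_eq_zero_iff_dvd hQm).2 (hass.dvd.mul_left B), add_zero]
    have h1 := gmap_mod (A + B * P) Q hQm hQi
    have h2 := gmap_mod A Q hQm hQi
    rw [hmod] at h1
    have h3 := dvd_sub h1 h2
    rw [sub_sub_sub_cancel_right] at h3
    exact hass.symm.dvd.trans h3
  · rintro n - B rfl
    exact (gmap_spec B).2
  · rintro ⟨G, hG⟩
    obtain ⟨b, hb, hH⟩ := IsLocalization.integerNormalization_spec (nonZeroDivisors F[X]) G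
    set H := IsLocalization.integerNormalization (nonZeroDivisors F[X]) G
    have hb0 : b ≠ 0 := nonZeroDivisors.ne_zero hb
    obtain ⟨C, N, hCN⟩ := natDegree_eval_bound H
    have key : ∀ A : F[X], H.eval A = b * gmap A := by
      intro A
      apply IsFractionRing.injective F[X] (RatFunc F)
      rw [map_mul, ← hG A, ← eval_map_apply, hH, eval_smul, Algebra.smul_def]
    obtain ⟨n, hn, hlt⟩ := growth C N
    have h1 := (gmap_spec (X ^ n : F[X])).2.1
    have h2 := hCN (X ^ n)
    have hg0 : gmap (X ^ n : F[X]) ≠ 0 := by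
      intro h0
      rw [h0, natDegree_zero] at h1
      have : 0 < Fintype.card F ^ (X ^ n : F[X]).natDegree := pow_pos Fintype.card_pos _
      omega
    rw [key, natDegree_mul hb0 hg0] at h2
    rw [natDegree_X_pow] at h1 h2
    have h3 : 2 ^ n ≤ Fintype.card F ^ n := Nat.pow_le_pow_left Fintype.one_lt_card n
    omega
end

section
/- Let U ∈ 𝒜 with U′ ≠ 0, let A ∈ 𝒜 \ {0}, and let M and N₁ be positive integers. Then there exists an integer n ≥ N₁ such that A − Uⁿ has an irreducible factor of degree at least M. -/
open Polynomial

lemma aux_split {F : Type*} [Field F] (U : F[X]) (n : ℕ) : ∀ X : F[X], X ≠ 0 → X.natDegree ≤ n →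
    ∃ (Y Z : F[X]) (K : ℕ), X = Y * Z ∧ Y ∣ U ^ K ∧ IsCoprime Z U := by
  classical
  induction n with
  | zero =>
    intro X hX hd
    refine ⟨1, X, 0, by simp, by simp, ?_⟩
    have : IsUnit X := by
      rw [Polynomial.isUnit_iff_degree_eq_zero, Polynomial.degree_eq_natDegree hX]
      simp; omega
    obtain ⟨u, rfl⟩ := this
    exact ⟨(↑u⁻¹ : F[X]), 0, by simp⟩
  | succ n ih =>
    intro X hX hd
    by_cases hc : IsCoprime X U
    · exact ⟨1, X, 0, by simp, by simp, hc⟩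
    · obtain ⟨X', hX'⟩ := EuclideanDomain.gcd_dvd_left X U
      have hg : ¬ IsUnit (EuclideanDomain.gcd X U) := by
        rwa [EuclideanDomain.gcd_isUnit_iff]
      have hU' := EuclideanDomain.gcd_dvd_right X U
      generalize EuclideanDomain.gcd X U = g at *
      have hg0 : g ≠ 0 := by rintro rfl; simp at hX'; exact hX hX'
      have hX0 : X' ≠ 0 := by rintro rfl; simp at hX'; exact hX hX'
      have hgd : 0 < g.natDegree := by
        rw [Polynomial.isUnit_iff_degree_eq_zero, Polynomial.degree_eq_natDegree hg0] at hg
        simp at hg; omega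
      have := Polynomial.natDegree_mul hg0 hX0
      rw [← hX'] at this
      obtain ⟨Y, Z, K, h1, h2, h3⟩ := ih X' hX0 (by omega)
      refine ⟨g * Y, Z, K + 1, by rw [hX', h1]; ring, ?_, h3⟩
      rw [pow_succ, mul_comm]
      exact mul_dvd_mul h2 hU'

lemma aux_finite {F : Type*} [Field F] [Fintype F] (n : ℕ) : Finite (Polynomial.degreeLT F n) :=
  Finite.of_equiv _ (Polynomial.degreeLTEquiv F n).symm.toEquiv

lemma aux_period {F : Type*} [Field F] [Fintype F] (U S : F[X]) (hS : S ≠ 0)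
    (hc : IsCoprime S U) : ∃ r : ℕ, 0 < r ∧ S ∣ U ^ r - 1 := by
  haveI := aux_finite (F := F) S.natDegree
  let f : ℕ → Polynomial.degreeLT F S.natDegree := fun n => ⟨U ^ n % S, by
    rw [Polynomial.mem_degreeLT, ← Polynomial.degree_eq_natDegree hS]
    exact Polynomial.degree_mod_lt _ hS⟩
  obtain ⟨a, b, hab, h⟩ := Finite.exists_ne_map_eq_of_infinite f
  have h' : U ^ a % S = U ^ b % S := congrArg Subtype.val h
  clear h
  wlog hlt : a < b generalizing a b
  · exact this b a hab.symm h'.symm (by omega)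
  refine ⟨b - a, by omega, ?_⟩
  have h1 : S ∣ U ^ b - U ^ a := by
    rw [← EuclideanDomain.mod_eq_zero, Polynomial.sub_mod, h', sub_self]
  have h2 : U ^ b - U ^ a = U ^ a * (U ^ (b - a) - 1) := by
    rw [mul_sub, ← pow_add, mul_one, Nat.add_sub_cancel' hlt.le]
  rw [h2] at h1
  exact (hc.pow_right).dvd_of_dvd_mul_left h1

lemma aux_W (F : Type*) [Field F] [Fintype F] (M : ℕ) :
    ∃ W : F[X], W ≠ 0 ∧ ∀ P : F[X], P ≠ 0 → P.natDegree < M → P ∣ W := by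
  classical
  have hfin : (Polynomial.degreeLT F M : Set F[X]).Finite := Set.finite_coe_iff.mp (aux_finite M)
  refine ⟨∏ P ∈ hfin.toFinset.erase 0, P, ?_, ?_⟩
  · rw [Finset.prod_ne_zero_iff]
    intro a ha
    exact (Finset.mem_erase.mp ha).1
  · intro P hP hd
    apply Finset.dvd_prod_of_mem (fun P : F[X] => P)
    rw [Finset.mem_erase, Set.Finite.mem_toFinset]
    refine ⟨hP, ?_⟩
    rw [SetLike.mem_coe, Polynomial.mem_degreeLT, Polynomial.degree_eq_natDegree hP]
    exact_mod_cast hd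

/-- Let `U ∈ 𝒜 = 𝔽[t]` with `U' ≠ 0`, let `A ∈ 𝒜 \ {0}`, and let `M, N₁` be positive
integers. Then there is an integer `n ≥ N₁` such that `A - Uⁿ` has an irreducible factor
of degree at least `M`. -/
theorem exists_large_degree_irreducible_factor {F : Type*} [Field F] [Fintype F]
    (U : F[X]) (hU : Polynomial.derivative U ≠ 0)
    (A : F[X]) (hA : A ≠ 0)
    (M N₁ : ℕ) (hM : 0 < M) (hN₁ : 0 < N₁) :
    ∃ n : ℕ, N₁ ≤ n ∧ ∃ P : F[X], Irreducible P ∧ P ∣ (A - U ^ n) ∧ M ≤ P.natDegree := by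
  have hUd : 0 < U.natDegree := by
    rw [Nat.pos_iff_ne_zero]
    intro h
    exact hU (Polynomial.derivative_of_natDegree_zero h)
  obtain ⟨W, hW0, hW⟩ := aux_W F M
  obtain ⟨a₁, a₂, k, hA', ⟨e, he⟩, hac⟩ := aux_split U _ A hA le_rfl
  obtain ⟨w₁, w₂, l, hW', hwl, hwc⟩ := aux_split U _ W hW0 le_rfl
  obtain ⟨s, hs⟩ : ∃ s, s = N₁ + l + A.natDegree := ⟨_, rfl⟩
  obtain ⟨n₀, hn₀⟩ : ∃ n₀, n₀ = k + (s + 1) := ⟨_, rfl⟩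
  have hdeg : ∀ n, n₀ ≤ n → (A - U ^ n).natDegree = n * U.natDegree := by
    intro n hn
    rw [Polynomial.natDegree_sub_eq_right_of_natDegree_lt, Polynomial.natDegree_pow]
    rw [Polynomial.natDegree_pow]
    nlinarith
  have hne : ∀ n, n₀ ≤ n → A - U ^ n ≠ 0 := by
    intro n hn h0
    have := hdeg n hn
    rw [h0, Polynomial.natDegree_zero] at this
    have : 0 < n * U.natDegree := Nat.mul_pos (by omega) hUd
    omega
  have hB : A - U ^ n₀ = a₁ * (a₂ - U * (e * U ^ s)) := by
    rw [hn₀, pow_add, he, hA']; ring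
  have hB0 := hne n₀ le_rfl
  have hcop : IsCoprime (w₂ * (a₂ - U * (e * U ^ s))) U := by
    refine hwc.mul_left ?_
    rw [sub_eq_add_neg, ← mul_neg]
    exact IsCoprime.add_mul_left_left hac _
  have hS0 : w₂ * (a₂ - U * (e * U ^ s)) ≠ 0 := by
    apply mul_ne_zero
    · rintro rfl; simp at hW'; exact hW0 hW'
    · intro h; rw [hB, h, mul_zero] at hB0; exact hB0 rfl
  obtain ⟨r, hr, c, hc⟩ := aux_period U _ hS0 hcop
  have hd1 : a₁ * w₁ ∣ U ^ n₀ := by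
    rw [hn₀, pow_add]
    exact mul_dvd_mul ⟨e, he⟩ (hwl.trans (pow_dvd_pow _ (by omega)))
  obtain ⟨d, hd⟩ := hd1
  have key : A - U ^ (n₀ + r) = (A - U ^ n₀) * (1 - W * (c * d)) := by
    have : A - U ^ (n₀ + r) = (A - U ^ n₀) - U ^ n₀ * (U ^ r - 1) := by
      rw [pow_add]; ring
    rw [this, hc]
    nth_rewrite 2 [hd]
    rw [hB, hW']; ring
  have hq0 : 1 - W * (c * d) ≠ 0 := by
    intro h
    rw [h, mul_zero] at key
    exact hne _ (by omega) key
  have hqu : ¬ IsUnit (1 - W * (c * d)) := by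
    intro h
    have h1 := Polynomial.natDegree_mul hB0 hq0
    rw [← key, hdeg _ (by omega), hdeg _ le_rfl, Polynomial.natDegree_eq_zero_of_isUnit h] at h1
    nlinarith
  obtain ⟨P, hP, hPd⟩ := WfDvdMonoid.exists_irreducible_factor hqu hq0
  refine ⟨n₀ + r, by omega, P, hP, key ▸ hPd.mul_left _, ?_⟩
  by_contra hlt
  have h1 := hW P hP.ne_zero (by omega)
  have h2 : P ∣ 1 := by
    have := dvd_add hPd (h1.mul_right (c * d))
    simpa using this
  exact hP.not_isUnit (isUnit_of_dvd_one h2)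
end
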